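/- Fix n ≥ 1, a partition λ, an n-core δ, and N ≥ 1. Let s_λ(A_q(x)) be the Schur polynomial s_λ evaluated at the nN variables {q^{2j}x_i : 1 ≤ i ≤ N, 0 ≤ j ≤ n−1}. Then in ℤ[q][x_1,…,x_N] one has s_λ(A_q(x)) = Σ_{μ,ν} c^λ_μ(q) · c^ν_μ(q) · s_ν(x_1,…,x_N), where μ ranges over all partitions whose n-core is δ with |μ/δ| = n|λ|, and ν ranges over partitions of n|λ|. -/

import Mathlib

/-!
Partitions are encoded by Maya diagrams, here through the diagonal profile `profile la : ℤ → ℤ`,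
which drops by one exactly at the beads. Adding an `n`-ribbon to a partition moves a bead from some
position `p` to `p + n`, and the spin of the ribbon is the number of beads jumped over
(`exists_adds_of_isRibbon`, `Adds.ribbonSpin`). A horizontal `n`-ribbon strip is a sequence of such
moves at strictly increasing positions (`stripWFrom_of_adds`, `stripWFrom_of_not`), so the operator
adding a strip is an ordered product of elementary operators `1 + (move at p)`, and its transpose
removes a strip.

Elementary additions and removals at distinct positions commute. At the same position they satisfy
an exchange relation twisted by the diagonal factors `∏_{s ≤ k < n} (1 - q^{2k} x y)`, where `s` is
the number of beads in a window of length `n` (`local_exchange`). These factors telescope along ℤ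
(`window_exchange`): far to the left the window is full and the factor is `1`, far to the right it
is empty and the factor is `∏_{k < n} (1 - q^{2k} x y)`. Hence adding and removing horizontal
strips commute up to this scalar (`strip_comm`).

Moving all additions past the removals and ending at the core `δ`, one finds that the Cauchy kernel
`Σ_μ 𝒢_μ(x) 𝒢_μ(y)`, over `μ` with `n`-core `δ`, depends on `n`, `δ` and `y` only through the series
`∏_y ∏_{k < n} (1 - q^{2k} y X)` (`kern_eq`). This series is the same for `n`-ribbons and the
letters `x_i` as for `1`-ribbons and the letters `q^{2j} x_i` (`eSer_alphabet`), which yields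
`Σ_μ 𝒢_μ(x) 𝒢_μ(y) = Σ_λ s_λ(A_q(x)) s_λ(y)` (`ribbon_cauchy`).

Schur polynomials in enough variables are linearly independent, by triangularity of their monomial
expansions (`schur_independent`). Comparing coefficients of `s_λ(y)` gives
`s_λ(A_q(x)) = Σ_μ c^λ_μ(q) 𝒢_μ(x)`, and `𝒢_μ(x)` expands in Schur polynomials with the same
coefficients in any number of variables (`expand_transfer`).
-/

open scoped Classical

noncomputable section

/-- A cell of a Young/skew diagram: (row, column). -/
abbrev Cell : Type := ℕ × ℕ

/-- Two cells are adjacent if they share an edge. -/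
def Adj (a b : Cell) : Prop :=
  (a.1 = b.1 ∧ (a.2 + 1 = b.2 ∨ b.2 + 1 = a.2)) ∨
  (a.2 = b.2 ∧ (a.1 + 1 = b.1 ∨ b.1 + 1 = a.1))

/-- Reachability inside a finite set of cells via edge-adjacency. -/
def Reach (S : Finset Cell) (a b : Cell) : Prop :=
  Relation.ReflTransGen (fun x y => y ∈ S ∧ Adj x y) a b

/-- A set of cells is connected if any two of its cells are joined by a path inside it. -/
def CellsConnected (S : Finset Cell) : Prop :=
  ∀ a ∈ S, ∀ b ∈ S, Reach S a b

/-- The connected component of the cell `c` inside `S`. -/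
def component (S : Finset Cell) (c : Cell) : Finset Cell :=
  S.filter (fun d => Reach S c d)

/-- The number of connected components of a set of cells. -/
def numComponents (S : Finset Cell) : ℕ :=
  (S.image (fun c => component S c)).card

/-- `S` contains no 2 × 2 square of cells. -/
def NoSquare (S : Finset Cell) : Prop :=
  ¬ ∃ i j : ℕ, (i, j) ∈ S ∧ (i + 1, j) ∈ S ∧ (i, j + 1) ∈ S ∧ (i + 1, j + 1) ∈ S

/-- `S` is (the set of cells of) a skew shape `λ/μ`. -/
def IsSkewCells (S : Finset Cell) : Prop :=
  ∃ lam mu : YoungDiagram, mu ≤ lam ∧ S = lam.cells \ mu.cells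

/-- An `n`-ribbon: a connected skew shape with `n` cells and no 2 × 2 square. -/
def IsRibbon (n : ℕ) (S : Finset Cell) : Prop :=
  S.card = n ∧ CellsConnected S ∧ NoSquare S ∧ IsSkewCells S

/-- The spin of a ribbon: the number of rows it occupies, minus 1. -/
def ribbonSpin (S : Finset Cell) : ℕ := (S.image Prod.fst).card - 1

/-- `T` is a tiling of the cell set `S` by `n`-ribbons. -/
def IsTilingOf (n : ℕ) (S : Finset Cell) (T : Finset (Finset Cell)) : Prop :=
  (∀ R ∈ T, IsRibbon n R) ∧
  ((T : Set (Finset Cell)).Pairwise fun A B => Disjoint A B) ∧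
  T.biUnion id = S

/-- `S` can be tiled by `n`-ribbons. -/
def Tileable (n : ℕ) (S : Finset Cell) : Prop := ∃ T, IsTilingOf n S T

/-- Total spin of a tiling. -/
def tilingSpin (T : Finset (Finset Cell)) : ℕ := ∑ R ∈ T, ribbonSpin R

/-- The maximum spin of an `n`-ribbon tiling of `S`. -/
def maxSpin (n : ℕ) (S : Finset Cell) : ℕ :=
  sSup {m : ℕ | ∃ T, IsTilingOf n S T ∧ tilingSpin T = m}

/-- `c` is the topright-most cell of `R`: maximal column and, among those, minimal row. -/
def TopRightCell (R : Finset Cell) (c : Cell) : Prop :=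
  c ∈ R ∧ ∀ d ∈ R, d.2 ≤ c.2 ∧ (d.2 = c.2 → c.1 ≤ d.1)

/-- Every ribbon of the tiling `T` has its topright-most cell touching the northern
edge of the shape `S`: the cell directly above it is not in `S`. -/
def NorthernCond (S : Finset Cell) (T : Finset (Finset Cell)) : Prop :=
  ∀ R ∈ T, ∀ c : Cell, TopRightCell R c → (c.1 = 0 ∨ (c.1 - 1, c.2) ∉ S)

/-- `T` is a tiling of `S` witnessing that `S` is a horizontal `n`-ribbon strip. -/
def IsHStripTiling (n : ℕ) (S : Finset Cell) (T : Finset (Finset Cell)) : Prop :=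
  IsTilingOf n S T ∧ NorthernCond S T

/-- `S` is a horizontal `n`-ribbon strip. -/
def IsHStripCells (n : ℕ) (S : Finset Cell) : Prop :=
  IsSkewCells S ∧ ∃ T, IsHStripTiling n S T

/-- The spin of a horizontal `n`-ribbon strip (via its tiling, which is unique when it exists). -/
def stripSpin (n : ℕ) (S : Finset Cell) : ℕ :=
  if h : ∃ T, IsHStripTiling n S T then tilingSpin h.choose else 0

/-- Conjugate (transpose) of a set of cells. -/
def swapCells (S : Finset Cell) : Finset Cell := S.image Prod.swap

/-- `S` is a vertical `n`-ribbon strip: its conjugate is a horizontal one. -/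
def IsVStripCells (n : ℕ) (S : Finset Cell) : Prop :=
  IsHStripCells n (swapCells S)

/-- The spin of a vertical `n`-ribbon strip with `k = |S|/n` ribbons:
`k (n-1)` minus the spin of the conjugate strip. -/
def vStripSpin (n : ℕ) (S : Finset Cell) : ℕ :=
  (S.card / n) * (n - 1) - stripSpin n (swapCells S)

/-- `T` is a tiling of `S` witnessing that `S` is a vertical `n`-ribbon strip. -/
def IsVStripTiling (n : ℕ) (S : Finset Cell) (T : Finset (Finset Cell)) : Prop :=
  IsHStripTiling n (swapCells S) (T.image swapCells)

/-- `mu` is obtained from `lam` by removing a single `n`-ribbon. -/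
def RibbonStep (n : ℕ) (lam mu : YoungDiagram) : Prop :=
  mu ≤ lam ∧ IsRibbon n (lam.cells \ mu.cells)

/-- `delta` is the `n`-core of `lam`: it is obtained from `lam` by successively removing
`n`-ribbons, and no further `n`-ribbon can be removed from it. -/
def IsNCoreOf (n : ℕ) (delta lam : YoungDiagram) : Prop :=
  Relation.ReflTransGen (RibbonStep n) lam delta ∧ ∀ mu, ¬ RibbonStep n delta mu

/-- The `n`-core of a partition (defined via choice; it exists and is unique). -/
def nCore (n : ℕ) (lam : YoungDiagram) : YoungDiagram :=
  if h : ∃ d, IsNCoreOf n d lam then h.choose else lam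

/-- A semistandard `n`-ribbon tableau of shape `lam/mu` with entries in `{1, …, N}`:
a chain of partitions `mu = μ⁰ ⊆ μ¹ ⊆ ⋯ ⊆ μᴺ = lam` where each `μⁱ/μ^{i-1}` is a (possibly
empty) horizontal `n`-ribbon strip, together with the (unique) tiling of each strip. -/
structure RibbonTableau (n N : ℕ) (lam mu : YoungDiagram) where
  chain : Fin (N + 1) → YoungDiagram
  chain_zero : chain 0 = mu
  chain_last : chain (Fin.last N) = lam
  chain_mono : ∀ i : Fin N, chain i.castSucc ≤ chain i.succ
  tiling : Fin N → Finset (Finset Cell)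
  tiling_strip : ∀ i : Fin N,
    IsHStripTiling n ((chain i.succ).cells \ (chain i.castSucc).cells) (tiling i)

/-- The spin of a ribbon tableau. -/
def RibbonTableau.spin {n N : ℕ} {lam mu : YoungDiagram} (T : RibbonTableau n N lam mu) : ℕ :=
  ∑ i : Fin N, tilingSpin (T.tiling i)

/-- A standard ribbon tableau: each letter occurs exactly once. -/
def RibbonTableau.IsStandard {n N : ℕ} {lam mu : YoungDiagram}
    (T : RibbonTableau n N lam mu) : Prop :=
  ∀ i : Fin N, (T.tiling i).card = 1

/-- The monomial `q^{spin T} x^{weight T}` attached to a ribbon tableau. -/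
def tableauTerm {n N : ℕ} {lam mu : YoungDiagram} (T : RibbonTableau n N lam mu) :
    MvPolynomial (Fin N) (Polynomial ℤ) :=
  MvPolynomial.C (Polynomial.X ^ T.spin) *
    ∏ i : Fin N, MvPolynomial.X i ^ (T.tiling i).card

/-- The ribbon function `𝒢_{lam/mu}(x₁, …, x_N; q)`. -/
def ribbonFn (n N : ℕ) (lam mu : YoungDiagram) : MvPolynomial (Fin N) (Polynomial ℤ) :=
  ∑ᶠ T : RibbonTableau n N lam mu, tableauTerm T

/-- `𝒢_lam = 𝒢_{lam/(n-core of lam)}`. -/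
def G (n N : ℕ) (lam : YoungDiagram) : MvPolynomial (Fin N) (Polynomial ℤ) :=
  ribbonFn n N lam (nCore n lam)

/-- The Schur polynomial `s_ν(x₁,…,x_N)`, realized as the `n = 1` ribbon function
(1-ribbon tableaux are exactly semistandard Young tableaux, and all spins are 0). -/
def schurPoly (N : ℕ) (nu : YoungDiagram) : MvPolynomial (Fin N) (Polynomial ℤ) :=
  ribbonFn 1 N nu ⊥

/-- The cells of the `i`-th horizontal strip of a decomposition. -/
def stripCells {len : ℕ} (strip : Fin len → Finset (Finset Cell)) (i : Fin len) : Finset Cell :=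
  (strip i).biUnion id

/-- The cells of `lam` together with the strips up to (and including) `i`. -/
def partialCells {len : ℕ} (strip : Fin len → Finset (Finset Cell)) (lam : YoungDiagram)
    (i : Fin len) : Finset Cell :=
  lam.cells ∪ (Finset.univ.filter (fun j => j ≤ i)).biUnion (fun j => stripCells strip j)

/-- The union of the cells of the strips strictly before `i`. -/
def prevCells {len : ℕ} (strip : Fin len → Finset (Finset Cell)) (i : Fin len) : Finset Cell :=
  (Finset.univ.filter (fun j => j < i)).biUnion (fun j => stripCells strip j)

/-- Two cell sets touch if some cell of one is adjacent to some cell of the other. -/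
def Touches (A B : Finset Cell) : Prop :=
  ∃ a ∈ A, ∃ b ∈ B, Adj a b

/-- `R` is the rightmost ribbon within the cell set `C`. -/
def IsRightmostIn (R C : Finset Cell) : Prop :=
  ∃ c ∈ R, ∀ d ∈ C, d.2 ≤ c.2

/-- A border `n`-ribbon strip of shape `mu/lam`: the connected skew shape `mu/lam` with a
distinguished decomposition into disjoint non-empty horizontal `n`-ribbon strips
`T₁, …, T_len` (each recorded by its tiling) such that each partial union is a skew shape,
`T₁` is connected, and for `i ≥ 2` every connected component `C` of `Tᵢ` is such that
`C ∪ (T₁ ∪ ⋯ ∪ T_{i-1})` is not a horizontal `n`-ribbon strip and only the rightmost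
ribbon of `C` touches `T₁ ∪ ⋯ ∪ T_{i-1}`. -/
structure BorderRibbonStrip (n : ℕ) (lam mu : YoungDiagram) where
  len : ℕ
  len_pos : 1 ≤ len
  strip : Fin len → Finset (Finset Cell)
  sub : lam ≤ mu
  connected : CellsConnected (mu.cells \ lam.cells)
  nonempty : ∀ i, (strip i).Nonempty
  disj : ∀ i j, i ≠ j → Disjoint (stripCells strip i) (stripCells strip j)
  cover : Finset.univ.biUnion (fun i => stripCells strip i) = mu.cells \ lam.cells
  shape : ∀ i, ∃ nu : YoungDiagram, nu.cells = partialCells strip lam i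
  hstrips : ∀ i, IsHStripTiling n (stripCells strip i) (strip i)
  first_connected : CellsConnected (stripCells strip ⟨0, len_pos⟩)
  comp_cond : ∀ i : Fin len, 0 < (i : ℕ) → ∀ c ∈ stripCells strip i,
    (¬ IsHStripCells n (component (stripCells strip i) c ∪ prevCells strip i)) ∧
    (∀ R ∈ strip i, R ⊆ component (stripCells strip i) c →
      Touches R (prevCells strip i) → IsRightmostIn R (component (stripCells strip i) c))

/-- The height of a border ribbon strip: total number of connected components of its
horizontal strips, minus 1. -/
def BorderRibbonStrip.height {n : ℕ} {lam mu : YoungDiagram}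
    (S : BorderRibbonStrip n lam mu) : ℕ :=
  (∑ i : Fin S.len, numComponents (stripCells S.strip i)) - 1

/-- The spin of a border ribbon strip. -/
def BorderRibbonStrip.spin {n : ℕ} {lam mu : YoungDiagram}
    (S : BorderRibbonStrip n lam mu) : ℕ :=
  ∑ i : Fin S.len, tilingSpin (S.strip i)

/-- The size (number of ribbons) of a border ribbon strip. -/
def BorderRibbonStrip.size {n : ℕ} {lam mu : YoungDiagram}
    (S : BorderRibbonStrip n lam mu) : ℕ :=
  ∑ i : Fin S.len, (S.strip i).card

/-- `𝒳^{mu/lam}_k(q) = Σ_S (-1)^{h(S)} q^{s(S)}` over border `n`-ribbon strips of shape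
`mu/lam` with `k` ribbons. -/
def chiX (n k : ℕ) (lam mu : YoungDiagram) : Polynomial ℤ :=
  ∑ᶠ S : BorderRibbonStrip n lam mu,
    if S.size = k then (-1) ^ S.height * Polynomial.X ^ S.spin else 0

/-- The complete homogeneous symmetric polynomial of degree `k` evaluated at the family `v`. -/
def hPoly {ι R : Type*} [Fintype ι] [DecidableEq ι] [CommSemiring R] (k : ℕ) (v : ι → R) : R :=
  ∑ d : Sym ι k, ((d : Multiset ι).map v).prod

/-- The elementary symmetric polynomial of degree `k` evaluated at the family `v`. -/
def ePoly {ι R : Type*} [Fintype ι] [DecidableEq ι] [CommSemiring R] (k : ℕ) (v : ι → R) : R :=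
  ∑ s ∈ Finset.univ.powersetCard k, ∏ i ∈ s, v i

/-- The alphabet `A_q(x) = {q^{2j} x_i : 1 ≤ i ≤ N, 0 ≤ j ≤ n-1}`. -/
def alphabetVal (n N : ℕ) : Fin N × Fin n → MvPolynomial (Fin N) (Polynomial ℤ) :=
  fun p => MvPolynomial.C (Polynomial.X ^ (2 * (p.2 : ℕ))) * MvPolynomial.X p.1

/-- The Schur function `s_lam` evaluated at the alphabet `A_q(x)`,
i.e. the plethysm `s_lam[(1+q²+⋯+q^{2n-2})X]` in `N` variables. -/
def schurAlph (n N : ℕ) (lam : YoungDiagram) : MvPolynomial (Fin N) (Polynomial ℤ) :=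
  MvPolynomial.aeval
    (fun t : Fin (n * N) => alphabetVal n N (Prod.swap (finProdFinEquiv.symm t)))
    (schurPoly (n * N) lam)

end

noncomputable section

/-! ### Diagonal profiles of Young diagrams -/

/-- The content `column - row` of a cell. -/
def content (c : Cell) : ℤ := (c.2 : ℤ) - c.1

/-- The set of row indices `i` for which the square in row `i` and on the diagonal of content `d`
exists and lies outside `la`. -/
def outsideRows (la : YoungDiagram) (d : ℤ) : Set ℕ :=
  {i : ℕ | 0 ≤ (i : ℤ) + d ∧ (i, ((i : ℤ) + d).toNat) ∉ la}

/-- The diagonal profile of `la`: the row index at which the diagonal of content `d` leaves `la`.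
In terms of the Maya diagram of `la` this is the number of beads at positions `≥ d`, so that there
is a bead at `d` exactly when `profile la (d + 1) < profile la d`. -/
def profile (la : YoungDiagram) (d : ℤ) : ℤ := ((sInf (outsideRows la d) : ℕ) : ℤ)

theorem lt_card_of_mem (la : YoungDiagram) {i j : ℕ} (h : (i, j) ∈ la) :
    i + j < la.card := by
  have h1 : ((Finset.range (i + 1)).image (fun a => (a, 0)) ∪
      (Finset.range (j + 1)).image (fun b => (i, b))) ⊆ la.cells := by
    intro c hc
    simp only [Finset.mem_union, Finset.mem_image, Finset.mem_range] at hc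
    rcases hc with ⟨a, ha, rfl⟩ | ⟨b, hb, rfl⟩
    · exact la.up_left_mem (by omega) (by omega) h
    · exact la.up_left_mem le_rfl (by omega) h
  have h2 := Finset.card_le_card h1
  have h3 := Finset.card_union_add_card_inter ((Finset.range (i + 1)).image (fun a => (a, 0)))
      ((Finset.range (j + 1)).image (fun b => (i, b)))
  have h4 : ((Finset.range (i + 1)).image (fun a => (a, 0)) ∩
      (Finset.range (j + 1)).image (fun b => (i, b))) ⊆ {(i, 0)} := by
    intro c hc
    simp only [Finset.mem_inter, Finset.mem_image, Finset.mem_range] at hc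
    obtain ⟨⟨a, ha, rfl⟩, ⟨b, hb, hb2⟩⟩ := hc
    simp only [Prod.mk.injEq] at hb2
    simp [hb2.1]
  have h5 := Finset.card_le_card h4
  rw [Finset.card_image_of_injective _ (fun a b h => by simpa using h),
    Finset.card_image_of_injective _ (fun a b h => by simpa using h)] at h3
  simp only [Finset.card_range, Finset.card_singleton] at h3 h5
  change _ ≤ la.card at h2
  omega

theorem outsideRows_nonempty (la : YoungDiagram) (d : ℤ) : (outsideRows la d).Nonempty := by
  refine ⟨la.card + d.natAbs, by omega, fun h => ?_⟩
  have := lt_card_of_mem la h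
  omega

theorem mem_iff_profile (la : YoungDiagram) (i j : ℕ) :
    (i, j) ∈ la ↔ (i : ℤ) < profile la ((j : ℤ) - i) := by
  unfold profile
  have hm := Nat.sInf_mem (outsideRows_nonempty la ((j : ℤ) - i))
  constructor
  · intro h
    by_contra hcon
    have hle : sInf (outsideRows la ((j : ℤ) - i)) ≤ i := by omega
    exact hm.2 (la.up_left_mem hle (by omega) h)
  · intro h
    have hlt : i < sInf (outsideRows la ((j : ℤ) - i)) := by omega
    have := Nat.notMem_of_lt_sInf hlt
    unfold outsideRows at this
    simp only [Set.mem_ofPred_eq, not_and, not_not] at this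
    have h2 := this (by omega)
    have e : ((i : ℤ) + ((j : ℤ) - i)).toNat = j := by omega
    rwa [e] at h2

theorem profile_nonneg (la : YoungDiagram) (d : ℤ) : 0 ≤ profile la d := by
  unfold profile; omega

theorem profile_ge_neg (la : YoungDiagram) (d : ℤ) : -d ≤ profile la d := by
  unfold profile
  have := (Nat.sInf_mem (outsideRows_nonempty la d)).1
  omega

/-- A profile is determined by the membership criterion together with its lower bounds. -/
theorem profile_unique (la : YoungDiagram) (f : ℤ → ℤ) (h0 : ∀ d, 0 ≤ f d) (h1 : ∀ d, -d ≤ f d)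
    (hf : ∀ i j : ℕ, (i, j) ∈ la ↔ (i : ℤ) < f ((j : ℤ) - i)) (d : ℤ) : profile la d = f d := by
  have a0 := profile_nonneg la d
  have a1 := profile_ge_neg la d
  have b0 := h0 d
  have b1 := h1 d
  rcases lt_trichotomy (profile la d) (f d) with h | h | h
  · have e1 := hf (profile la d).toNat (profile la d + d).toNat
    rw [mem_iff_profile] at e1
    have e : (((profile la d + d).toNat : ℤ) - (profile la d).toNat) = d := by omega
    rw [e] at e1
    omega
  · exact h
  · have e1 := hf (f d).toNat (f d + d).toNat
    rw [mem_iff_profile] at e1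
    have e : (((f d + d).toNat : ℤ) - (f d).toNat) = d := by omega
    rw [e] at e1
    omega

theorem profile_succ_le (la : YoungDiagram) (d : ℤ) : profile la (d + 1) ≤ profile la d := by
  by_contra hcon
  have a0 := profile_nonneg la d
  have a1 := profile_ge_neg la d
  have h1 : ((profile la d).toNat, (profile la d + d + 1).toNat) ∈ la := by
    rw [mem_iff_profile]
    have e : (((profile la d + d + 1).toNat : ℤ) - (profile la d).toNat) = d + 1 := by omega
    rw [e]; omega
  have h2 := la.up_left_mem (le_refl _) (show (profile la d + d).toNat ≤ _ by omega) h1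
  rw [mem_iff_profile] at h2
  have e : (((profile la d + d).toNat : ℤ) - (profile la d).toNat) = d := by omega
  rw [e] at h2; omega

theorem profile_le_succ (la : YoungDiagram) (d : ℤ) : profile la d ≤ profile la (d + 1) + 1 := by
  by_contra hcon
  have a0 := profile_nonneg la (d + 1)
  have a1 := profile_ge_neg la (d + 1)
  have h1 : ((profile la (d + 1) + 1).toNat, (profile la (d + 1) + d + 1).toNat) ∈ la := by
    rw [mem_iff_profile]
    have e : (((profile la (d + 1) + d + 1).toNat : ℤ) - (profile la (d + 1) + 1).toNat) = d := by
      omega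
    rw [e]; omega
  have h2 := la.up_left_mem (show (profile la (d + 1)).toNat ≤ _ by omega) le_rfl h1
  rw [mem_iff_profile] at h2
  have e : (((profile la (d + 1) + d + 1).toNat : ℤ) - (profile la (d + 1)).toNat) = d + 1 := by
    omega
  rw [e] at h2; omega

theorem profile_antitone (la : YoungDiagram) : Antitone (profile la) :=
  antitone_int_of_succ_le (profile_succ_le la)

theorem profile_le_add (la : YoungDiagram) (d : ℤ) (k : ℕ) :
    profile la d ≤ profile la (d + k) + k := by
  induction k with
  | zero => simp
  | succ k ih =>
    have := profile_le_succ la (d + k)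
    have e : d + ((k + 1 : ℕ) : ℤ) = d + k + 1 := by push_cast; ring
    rw [e]; push_cast; omega

theorem le_iff_profile {la mu : YoungDiagram} : la ≤ mu ↔ ∀ d, profile la d ≤ profile mu d := by
  constructor
  · intro h d
    by_contra hcon
    have a0 := profile_nonneg mu d
    have a1 := profile_ge_neg mu d
    have h1 : ((profile mu d).toNat, (profile mu d + d).toNat) ∈ la := by
      rw [mem_iff_profile]
      have e : (((profile mu d + d).toNat : ℤ) - (profile mu d).toNat) = d := by omega
      rw [e]; omega
    have h2 := h h1
    rw [mem_iff_profile] at h2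
    have e : (((profile mu d + d).toNat : ℤ) - (profile mu d).toNat) = d := by omega
    rw [e] at h2; omega
  · rintro h ⟨i, j⟩ hc
    rw [mem_iff_profile] at hc ⊢
    exact lt_of_lt_of_le hc (h _)

theorem ext_profile {la mu : YoungDiagram} (h : ∀ d, profile la d = profile mu d) : la = mu :=
  le_antisymm (le_iff_profile.2 fun d => (h d).le) (le_iff_profile.2 fun d => (h d).ge)

/-- To the right of the diagram the Maya diagram has no beads. -/
theorem profile_eq_zero (la : YoungDiagram) (d : ℤ) (hd : (la.card : ℤ) ≤ d) :
    profile la d = 0 := by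
  have a0 := profile_nonneg la d
  by_contra hcon
  have h1 : (0, d.toNat) ∈ la := by
    rw [mem_iff_profile]
    have e : ((d.toNat : ℤ) - (0 : ℕ)) = d := by omega
    rw [e]; push_cast; omega
  have := lt_card_of_mem la h1
  omega

/-- To the left of the diagram the Maya diagram is full of beads. -/
theorem profile_eq_neg (la : YoungDiagram) (d : ℤ) (hd : d ≤ -(la.card : ℤ)) :
    profile la d = -d := by
  have a0 := profile_ge_neg la d
  by_contra hcon
  have h1 : ((-d).toNat, 0) ∈ la := by
    rw [mem_iff_profile]
    have e : (((0 : ℕ) : ℤ) - (-d).toNat) = d := by omega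
    rw [e]; omega
  have := lt_card_of_mem la h1
  omega

/-- Every function with the properties of a profile is the profile of a Young diagram. -/
theorem exists_profile (f : ℤ → ℤ) (h0 : ∀ d, 0 ≤ f d) (h1 : ∀ d, -d ≤ f d)
    (hs : ∀ d, f (d + 1) ≤ f d) (hs' : ∀ d, f d ≤ f (d + 1) + 1)
    (M : ℕ) (hM : ∀ d : ℤ, (M : ℤ) ≤ d → f d = 0) (hM' : ∀ d : ℤ, d ≤ -(M : ℤ) → f d = -d) :
    ∃ la : YoungDiagram, ∀ d, profile la d = f d := by
  have hanti : Antitone f := antitone_int_of_succ_le hs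
  have hanti' : Monotone (fun d => f d + d) :=
    monotone_int_of_le_succ (fun d => by have := hs' d; show f d + d ≤ f (d + 1) + (d + 1); omega)
  have key : ∀ i j : ℕ, (i : ℤ) < f ((j : ℤ) - i) → i < M ∧ j < 2 * M := by
    intro i j h
    have hd1 : -(M : ℤ) < (j : ℤ) - i := by
      by_contra hcon
      have := hM' ((j : ℤ) - i) (by omega)
      omega
    have hd2 : (j : ℤ) - i < M := by
      by_contra hcon
      have := hM ((j : ℤ) - i) (by omega)
      omega
    have := hanti hd1.le
    have e := hM' (-M) le_rfl
    omega
  let cs : Finset (ℕ × ℕ) := (Finset.range M ×ˢ Finset.range (2 * M)).filter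
    (fun c => (c.1 : ℤ) < f ((c.2 : ℤ) - c.1))
  have hcs : ∀ i j : ℕ, (i, j) ∈ cs ↔ (i : ℤ) < f ((j : ℤ) - i) := by
    intro i j
    simp only [cs, Finset.mem_filter, Finset.mem_product, Finset.mem_range]
    exact ⟨fun h => h.2, fun h => ⟨key i j h, h⟩⟩
  refine ⟨⟨cs, ?_⟩, ?_⟩
  · rintro ⟨i, j⟩ ⟨i', j'⟩ hle h
    obtain ⟨hi, hj⟩ := Prod.mk_le_mk.1 hle
    simp only [Finset.mem_coe] at h ⊢
    rw [hcs] at h ⊢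
    have m1 : f ((j : ℤ) - i) ≤ f ((j' : ℤ) - i) := hanti (by omega)
    have m2 : f ((j' : ℤ) - i) + ((j' : ℤ) - i) ≤ f ((j' : ℤ) - i') + ((j' : ℤ) - i') :=
      hanti' (by omega)
    omega
  · apply profile_unique _ f h0 h1
    intro i j
    exact hcs i j

theorem mem_skew_iff {la mu : YoungDiagram} (i j : ℕ) : (i, j) ∈ la.cells \ mu.cells ↔
    profile mu ((j : ℤ) - i) ≤ i ∧ (i : ℤ) < profile la ((j : ℤ) - i) := by
  rw [Finset.mem_sdiff, YoungDiagram.mem_cells, YoungDiagram.mem_cells, mem_iff_profile,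
    mem_iff_profile, not_lt, and_comm]

end

noncomputable section

/-! ### Ribbons as bead moves -/

/-- `la` is obtained from `mu` by adding the `n`-ribbon with contents `p + 1, …, p + n`; on Maya
diagrams, the bead at `p` moves to `p + n`. -/
def Adds (n : ℕ) (p : ℤ) (mu la : YoungDiagram) : Prop :=
  ∀ d, profile la d = profile mu d + if p < d ∧ d ≤ p + n then 1 else 0

/-- The spin of the ribbon with contents `p + 1, …, p + n` added to `mu`: the number of beads of
`mu` strictly between `p` and `p + n`. -/
def moveSpin (n : ℕ) (p : ℤ) (mu : YoungDiagram) : ℕ :=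
  (profile mu (p + 1) - profile mu (p + n)).toNat

theorem Adds.unique {n : ℕ} {p : ℤ} {mu la la' : YoungDiagram} (h : Adds n p mu la)
    (h' : Adds n p mu la') : la = la' :=
  ext_profile fun d => by rw [h d, h' d]

theorem Adds.unique_left {n : ℕ} {p : ℤ} {mu mu' la : YoungDiagram} (h : Adds n p mu la)
    (h' : Adds n p mu' la) : mu = mu' :=
  ext_profile fun d => by have := h d; have := h' d; omega

theorem Adds.le {n : ℕ} {p : ℤ} {mu la : YoungDiagram} (h : Adds n p mu la) : mu ≤ la :=
  le_iff_profile.2 fun d => by rw [h d]; split_ifs <;> omega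

theorem Adds.inside {n : ℕ} {p : ℤ} {mu la : YoungDiagram} (h : Adds n p mu la) {d : ℤ}
    (h1 : p < d) (h2 : d ≤ p + n) : profile la d = profile mu d + 1 := by
  rw [h d, if_pos ⟨h1, h2⟩]

theorem Adds.outside {n : ℕ} {p : ℤ} {mu la : YoungDiagram} (h : Adds n p mu la) {d : ℤ}
    (h1 : d ≤ p ∨ p + n < d) : profile la d = profile mu d := by
  rw [h d, if_neg (by omega), add_zero]

theorem Adds.lt {n : ℕ} (hn : 1 ≤ n) {p : ℤ} {mu la : YoungDiagram} (h : Adds n p mu la) :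
    profile mu (p + 1) < profile mu p := by
  have h1 := h.inside (d := p + 1) (by omega) (by omega)
  have h2 := h.outside (d := p) (by omega)
  have := profile_succ_le la p
  omega

theorem Adds.eq {n : ℕ} (hn : 1 ≤ n) {p : ℤ} {mu la : YoungDiagram} (h : Adds n p mu la) :
    profile mu (p + n + 1) = profile mu (p + n) := by
  have h1 := h.inside (d := p + n) (by omega) (by omega)
  have h2 := h.outside (d := p + n + 1) (by omega)
  have := profile_le_succ la (p + n)
  have := profile_succ_le mu (p + n)
  omega

/-- A bead at `p` and a gap at `p + n` permit the move from `p` to `p + n`. -/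
theorem exists_adds {n : ℕ} {p : ℤ} {mu : YoungDiagram}
    (h1 : profile mu (p + 1) < profile mu p) (h2 : profile mu (p + n + 1) = profile mu (p + n)) :
    ∃ la, Adds n p mu la := by
  refine exists_profile (fun d => profile mu d + if p < d ∧ d ≤ p + n then 1 else 0) ?_ ?_ ?_ ?_
    (mu.card + p.natAbs + n + 1) ?_ ?_
  · intro d; have := profile_nonneg mu d; split_ifs <;> omega
  · intro d; have := profile_ge_neg mu d; split_ifs <;> omega
  · intro d
    have := profile_succ_le mu d
    split_ifs with a b b
    · omega
    · have : d = p := by omega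
      subst this; omega
    · omega
    · omega
  · intro d
    have := profile_le_succ mu d
    split_ifs with a b b
    · omega
    · have : d = p + n := by omega
      subst this; omega
    · omega
    · omega
  · intro d hd
    have := profile_eq_zero mu d (by omega)
    split_ifs <;> omega
  · intro d hd
    have := profile_eq_neg mu d (by omega)
    split_ifs <;> omega

/-- A gap at `p` and a bead at `p + n` permit the move back from `p + n` to `p`. -/
theorem exists_adds_left {n : ℕ} (hn : 1 ≤ n) {p : ℤ} {la : YoungDiagram}
    (h1 : profile la (p + 1) = profile la p) (h2 : profile la (p + n + 1) < profile la (p + n)) :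
    ∃ mu, Adds n p mu la := by
  -- Neither lower bound of the profile is attained on the window: the profile is constant on the
  -- step at `p` and strictly decreasing on the step at `p + n`.
  have key : ∀ d, p < d → d ≤ p + n → 1 ≤ profile la d ∧ -d + 1 ≤ profile la d := by
    intro d hd1 hd2
    have a := profile_antitone la hd2
    have b := profile_nonneg la (p + n + 1)
    have c := profile_le_add la (p + 1) (d - (p + 1)).toNat
    have e : p + 1 + ((d - (p + 1)).toNat : ℤ) = d := by omega
    rw [e] at c
    have f := profile_ge_neg la p
    omega
  obtain ⟨mu, hmu⟩ := exists_profile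
    (fun d => profile la d - if p < d ∧ d ≤ p + n then 1 else 0)
    (by intro d; have := profile_nonneg la d; have := key d; split_ifs <;> omega)
    (by intro d; have := profile_ge_neg la d; have := key d; split_ifs <;> omega)
    (by
      intro d
      have := profile_succ_le la d
      split_ifs with a b b
      · omega
      · omega
      · have : d = p + n := by omega
        subst this; omega
      · omega)
    (by
      intro d
      have := profile_le_succ la d
      split_ifs with a b b
      · omega
      · omega
      · have : d = p := by omega
        subst this; omega
      · omega)
    (la.card + p.natAbs + n + 1)
    (by
      intro d hd
      have := profile_eq_zero la d (by omega)
      split_ifs <;> omega)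
    (by
      intro d hd
      have := profile_eq_neg la d (by omega)
      split_ifs <;> omega)
  exact ⟨mu, fun d => by rw [hmu d]; omega⟩

theorem Adds.mem_iff {n : ℕ} {p : ℤ} {mu la : YoungDiagram} (h : Adds n p mu la) (i j : ℕ) :
    (i, j) ∈ la.cells \ mu.cells ↔
      p < (j : ℤ) - i ∧ (j : ℤ) - i ≤ p + n ∧ (i : ℤ) = profile mu ((j : ℤ) - i) := by
  rw [mem_skew_iff, h]
  split_ifs <;> omega

/-- The square of content `d` just outside `mu`. -/
def rimCell (mu : YoungDiagram) (d : ℤ) : Cell :=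
  ((profile mu d).toNat, (profile mu d + d).toNat)

theorem rimCell_content (mu : YoungDiagram) (d : ℤ) :
    (((rimCell mu d).2 : ℤ) - (rimCell mu d).1) = d := by
  have := profile_nonneg mu d
  have := profile_ge_neg mu d
  simp only [rimCell]; omega

theorem rimCell_fst (mu : YoungDiagram) (d : ℤ) : ((rimCell mu d).1 : ℤ) = profile mu d := by
  have := profile_nonneg mu d
  simp only [rimCell]; omega

theorem Adds.rimCell_mem {n : ℕ} {p : ℤ} {mu la : YoungDiagram} (h : Adds n p mu la) {d : ℤ}
    (h1 : p < d) (h2 : d ≤ p + n) : rimCell mu d ∈ la.cells \ mu.cells := by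
  have := (h.mem_iff (rimCell mu d).1 (rimCell mu d).2).2
    (by rw [rimCell_content, rimCell_fst]; exact ⟨h1, h2, rfl⟩)
  exact this

theorem Adds.eq_rimCell {n : ℕ} {p : ℤ} {mu la : YoungDiagram} (h : Adds n p mu la) {c : Cell}
    (hc : c ∈ la.cells \ mu.cells) : p < content c ∧ content c ≤ p + n ∧
      c = rimCell mu (content c) := by
  obtain ⟨i, j⟩ := c
  obtain ⟨h1, h2, h3⟩ := (h.mem_iff i j).1 hc
  refine ⟨h1, h2, ?_⟩
  simp only [rimCell, content, Prod.mk.injEq]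
  rw [← h3]
  omega

theorem Adds.skew_eq_image {n : ℕ} {p : ℤ} {mu la : YoungDiagram} (h : Adds n p mu la) :
    la.cells \ mu.cells = (Finset.Ioc p (p + n)).image (rimCell mu) := by
  ext c
  simp only [Finset.mem_image, Finset.mem_Ioc]
  constructor
  · intro hc
    obtain ⟨h1, h2, h3⟩ := h.eq_rimCell hc
    exact ⟨_, ⟨h1, h2⟩, h3.symm⟩
  · rintro ⟨d, ⟨h1, h2⟩, rfl⟩
    exact h.rimCell_mem h1 h2

theorem rimCell_injective (mu : YoungDiagram) : Function.Injective (rimCell mu) := by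
  intro d e hde
  rw [← rimCell_content mu d, ← rimCell_content mu e, hde]

theorem Adds.skew_card {n : ℕ} {p : ℤ} {mu la : YoungDiagram} (h : Adds n p mu la) :
    (la.cells \ mu.cells).card = n := by
  rw [h.skew_eq_image, Finset.card_image_of_injective _ (rimCell_injective mu)]
  simp

theorem Adds.card {n : ℕ} {p : ℤ} {mu la : YoungDiagram} (h : Adds n p mu la) :
    la.card = mu.card + n := by
  have h1 := h.skew_card
  have h2 : mu.cells ⊆ la.cells := h.le
  have h3 := Finset.card_sdiff_add_card_eq_card h2
  change la.cells.card = mu.cells.card + n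
  omega

theorem adj_rimCell (mu : YoungDiagram) (d : ℤ) : Adj (rimCell mu d) (rimCell mu (d + 1)) := by
  have a := profile_nonneg mu d
  have a1 := profile_nonneg mu (d + 1)
  have b := profile_ge_neg mu d
  have b1 := profile_ge_neg mu (d + 1)
  have c := profile_succ_le mu d
  have c1 := profile_le_succ mu d
  unfold Adj rimCell
  simp only
  omega

theorem Adj.symm {a b : Cell} (h : Adj a b) : Adj b a := by
  unfold Adj at h ⊢; omega

theorem Adds.isRibbon {n : ℕ} {p : ℤ} {mu la : YoungDiagram} (h : Adds n p mu la) :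
    IsRibbon n (la.cells \ mu.cells) := by
  refine ⟨h.skew_card, ?_, ?_, ⟨la, mu, h.le, rfl⟩⟩
  · have key : ∀ (k : ℕ) (d : ℤ), p < d → d + k ≤ p + n →
        Reach (la.cells \ mu.cells) (rimCell mu d) (rimCell mu (d + k)) ∧
        Reach (la.cells \ mu.cells) (rimCell mu (d + k)) (rimCell mu d) := by
      intro k
      induction k with
      | zero =>
        intro d _ _
        simp only [Nat.cast_zero, add_zero]
        exact ⟨Relation.ReflTransGen.refl, Relation.ReflTransGen.refl⟩
      | succ k ih =>
        intro d h1 h2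
        push_cast at h2
        obtain ⟨i1, i2⟩ := ih d h1 (by omega)
        have e : d + ((k + 1 : ℕ) : ℤ) = d + k + 1 := by push_cast; ring
        rw [e]
        exact ⟨Relation.ReflTransGen.tail i1
            ⟨h.rimCell_mem (by omega) (by omega), adj_rimCell mu _⟩,
          Relation.ReflTransGen.head
            ⟨h.rimCell_mem (by omega) (by omega), (adj_rimCell mu _).symm⟩ i2⟩
    intro a ha b hb
    obtain ⟨a1, a2, a3⟩ := h.eq_rimCell ha
    obtain ⟨b1, b2, b3⟩ := h.eq_rimCell hb
    rw [a3, b3]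
    rcases le_total (content a) (content b) with hab | hab
    · have := (key (content b - content a).toNat (content a) a1 (by omega)).1
      have e : content a + ((content b - content a).toNat : ℤ) = content b := by omega
      rwa [e] at this
    · have := (key (content a - content b).toNat (content b) b1 (by omega)).2
      have e : content b + ((content a - content b).toNat : ℤ) = content a := by omega
      rwa [e] at this
  · rintro ⟨i, j, h1, -, -, h4⟩
    rw [h.mem_iff] at h1 h4
    have e : (((j + 1 : ℕ) : ℤ) - ((i + 1 : ℕ) : ℤ)) = (j : ℤ) - i := by push_cast; ring
    rw [e] at h4
    push_cast at h4
    omega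

theorem reach_content {S : Finset Cell} {a b : Cell} (ha : a ∈ S) (h : Reach S a b) :
    b ∈ S ∧ ∀ e : ℤ, (content a ≤ e ∧ e ≤ content b) ∨ (content b ≤ e ∧ e ≤ content a) →
      ∃ c ∈ S, content c = e := by
  induction h with
  | refl => exact ⟨ha, fun e he => ⟨a, ha, by omega⟩⟩
  | tail h1 h2 ih =>
    rename_i b c
    refine ⟨h2.1, fun e he => ?_⟩
    have hbc : content c = content b + 1 ∨ content c = content b - 1 := by
      have := h2.2
      unfold Adj at this
      unfold content
      omega
    by_cases hec : content c = e
    · exact ⟨c, h2.1, hec⟩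
    · exact ih.2 e (by omega)

/-- Every ribbon is a bead move: its contents form an interval, and it has one square per content
since it contains no 2 × 2 square. -/
theorem exists_adds_of_isRibbon {n : ℕ} (hn : 1 ≤ n) {mu la : YoungDiagram} (hle : mu ≤ la)
    (h : IsRibbon n (la.cells \ mu.cells)) : ∃ p, Adds n p mu la := by
  obtain ⟨hcard, hconn, hsq, -⟩ := h
  set S := la.cells \ mu.cells with hS
  have hp := le_iff_profile.1 hle
  have hle1 : ∀ d, profile la d ≤ profile mu d + 1 := by
    intro d
    by_contra hcon
    have a := profile_nonneg mu d
    have b := profile_ge_neg mu d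
    apply hsq
    have hb : ∀ i j : ℕ, (i, j) ∈ S ↔ (i, j) ∈ la ∧ (i, j) ∉ mu := by
      intro i j; simp [hS]
    have m1 : rimCell mu d ∈ S := by
      rw [show rimCell mu d = ((rimCell mu d).1, (rimCell mu d).2) from rfl, hS, mem_skew_iff,
        rimCell_content, rimCell_fst]
      omega
    have m2 : ((rimCell mu d).1 + 1, (rimCell mu d).2 + 1) ∈ S := by
      rw [hS, mem_skew_iff]
      have e : ((((rimCell mu d).2 + 1 : ℕ) : ℤ) - (((rimCell mu d).1 + 1 : ℕ) : ℤ)) = d := by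
        have := rimCell_content mu d
        push_cast; omega
      rw [e]
      push_cast
      rw [rimCell_fst]
      omega
    refine ⟨(rimCell mu d).1, (rimCell mu d).2, m1, ?_, ?_, m2⟩
    · rw [hb] at m2 ⊢
      have m1' := (hb _ _).1 m1
      exact ⟨la.up_left_mem le_rfl (Nat.le_succ _) m2.1,
        fun hc => m1'.2 (mu.up_left_mem (Nat.le_succ _) le_rfl hc)⟩
    · rw [hb] at m2 ⊢
      have m1' := (hb _ _).1 m1
      exact ⟨la.up_left_mem (Nat.le_succ _) le_rfl m2.1,
        fun hc => m1'.2 (mu.up_left_mem le_rfl (Nat.le_succ _) hc)⟩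
  have hinj : Set.InjOn content (S : Set Cell) := by
    rintro ⟨i, j⟩ h1 ⟨i', j'⟩ h2 hc
    have h1' := (mem_skew_iff i j).1 h1
    have h2' := (mem_skew_iff i' j').1 h2
    simp only [content] at hc
    rw [hc] at h1'
    have := hle1 ((j' : ℤ) - i')
    ext <;> simp only <;> omega
  have hne : S.Nonempty := Finset.card_pos.1 (by omega)
  have hCne : (S.image content).Nonempty := hne.image _
  have hCcard : (S.image content).card = n := by
    rw [Finset.card_image_of_injOn hinj, hcard]
  obtain ⟨a, ha, ha'⟩ := Finset.mem_image.1 ((S.image content).min'_mem hCne)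
  obtain ⟨b, hb, hb'⟩ := Finset.mem_image.1 ((S.image content).max'_mem hCne)
  have hmin : ∀ c ∈ S, content a ≤ content c := fun c hc => by
    rw [ha']; exact Finset.min'_le _ _ (Finset.mem_image_of_mem _ hc)
  have hmax : ∀ c ∈ S, content c ≤ content b := fun c hc => by
    rw [hb']; exact Finset.le_max' _ _ (Finset.mem_image_of_mem _ hc)
  have hCeq : S.image content = Finset.Icc (content a) (content b) := by
    ext e
    rw [Finset.mem_image, Finset.mem_Icc]
    constructor
    · rintro ⟨c, hc, rfl⟩
      exact ⟨hmin c hc, hmax c hc⟩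
    · intro he
      exact (reach_content ha (hconn a ha b hb)).2 e (Or.inl he)
  have hab : content b = content a - 1 + n := by
    rw [hCeq, Int.card_Icc] at hCcard
    have := hmin b hb
    omega
  refine ⟨content a - 1, fun d => ?_⟩
  have h1 := hp d
  have h2 := hle1 d
  split_ifs with hd
  · have : d ∈ S.image content := by rw [hCeq, Finset.mem_Icc]; omega
    obtain ⟨⟨i, j⟩, hc, rfl⟩ := Finset.mem_image.1 this
    have := (mem_skew_iff i j).1 hc
    simp only [content] at *
    omega
  · by_contra hcon
    have m1 : rimCell mu d ∈ S := by
      rw [show rimCell mu d = ((rimCell mu d).1, (rimCell mu d).2) from rfl, hS, mem_skew_iff,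
        rimCell_content, rimCell_fst]
      omega
    have e : content (rimCell mu d) = d := rimCell_content mu d
    have := hmin _ m1
    have := hmax _ m1
    omega

theorem IsRibbon.exists_adds {n : ℕ} (hn : 1 ≤ n) {R : Finset Cell} (h : IsRibbon n R) :
    ∃ p mu la, Adds n p mu la ∧ R = la.cells \ mu.cells := by
  obtain ⟨la, mu, hle, rfl⟩ := h.2.2.2
  obtain ⟨p, hp⟩ := exists_adds_of_isRibbon hn hle h
  exact ⟨p, mu, la, hp, rfl⟩

/-- The spin of an added ribbon is the number of beads jumped over by the corresponding move. -/
theorem Adds.ribbonSpin {n : ℕ} (hn : 1 ≤ n) {p : ℤ} {mu la : YoungDiagram} (h : Adds n p mu la) :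
    ribbonSpin (la.cells \ mu.cells) = moveSpin n p mu := by
  have key : (la.cells \ mu.cells).image Prod.fst =
      Finset.Icc (profile mu (p + n)).toNat (profile mu (p + 1)).toNat := by
    ext i
    rw [h.skew_eq_image, Finset.image_image, Finset.mem_image, Finset.mem_Icc]
    constructor
    · rintro ⟨d, hd, rfl⟩
      rw [Finset.mem_Ioc] at hd
      have h1 := profile_antitone mu (show p + 1 ≤ d by omega)
      have h2 := profile_antitone mu (show d ≤ p + n by omega)
      simp only [Function.comp, rimCell]
      omega
    · rintro ⟨h1, h2⟩
      -- Discrete intermediate values: the first content at which the profile drops to `i` or below.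
      have hex : ∀ k : ℕ, (profile mu (p + 1 + k)) ≤ i → ∃ d, p < d ∧ d ≤ p + 1 + k ∧
          profile mu d = i := by
        intro k
        induction k with
        | zero =>
          intro hk
          simp only [Nat.cast_zero, add_zero] at hk
          have := profile_nonneg mu (p + 1)
          exact ⟨p + 1, by omega, by simp, by omega⟩
        | succ k ih =>
          intro hk
          have e : p + 1 + ((k + 1 : ℕ) : ℤ) = p + 1 + k + 1 := by push_cast; ring
          rw [e] at hk
          rw [e]
          by_cases hik : profile mu (p + 1 + k) ≤ i
          · obtain ⟨d, a, b, c⟩ := ih hik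
            exact ⟨d, a, by omega, c⟩
          · have := profile_le_succ mu (p + 1 + k)
            exact ⟨p + 1 + k + 1, by omega, le_rfl, by omega⟩
      obtain ⟨d, a, b, c⟩ := hex (n - 1) (by
        have e : p + 1 + ((n - 1 : ℕ) : ℤ) = p + n := by omega
        rw [e]
        have := profile_nonneg mu (p + n)
        omega)
      refine ⟨d, Finset.mem_Ioc.2 ⟨a, by omega⟩, ?_⟩
      simp only [Function.comp, rimCell]
      omega
  have hanti := profile_antitone mu (show p + 1 ≤ p + n by omega)
  have := profile_nonneg mu (p + n)
  unfold _root_.ribbonSpin moveSpin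
  rw [key, Nat.card_Icc]
  omega

/-- The position of an `n`-ribbon: one less than its smallest content, that is, the starting point
of the corresponding bead move. -/
def ribbonPos (n : ℕ) (R : Finset Cell) : ℤ :=
  if h : ∃ p mu la, Adds n p mu la ∧ R = la.cells \ mu.cells then h.choose else 0

theorem Adds.pos_unique {n : ℕ} (hn : 1 ≤ n) {p p' : ℤ} {mu la mu' la' : YoungDiagram}
    (h : Adds n p mu la) (h' : Adds n p' mu' la')
    (he : la.cells \ mu.cells = la'.cells \ mu'.cells) : p = p' := by
  have e (mu : YoungDiagram) (d : ℤ) : content (rimCell mu d) = d := rimCell_content mu d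
  have h1 := h.rimCell_mem (d := p + 1) (by omega) (by omega)
  have h2 := h'.rimCell_mem (d := p' + 1) (by omega) (by omega)
  rw [he] at h1
  rw [← he] at h2
  have a := (h'.eq_rimCell h1).1
  have b := (h.eq_rimCell h2).1
  rw [e] at a b
  omega

theorem Adds.ribbonPos {n : ℕ} (hn : 1 ≤ n) {p : ℤ} {mu la : YoungDiagram} (h : Adds n p mu la) :
    ribbonPos n (la.cells \ mu.cells) = p := by
  have hex : ∃ p mu' la', Adds n p mu' la' ∧ la.cells \ mu.cells = la'.cells \ mu'.cells :=
    ⟨p, mu, la, h, rfl⟩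
  unfold _root_.ribbonPos
  rw [dif_pos hex]
  obtain ⟨mu', la', h1, h2⟩ := hex.choose_spec
  exact (h.pos_unique hn h1 h2).symm

theorem IsRibbon.exists_adds_pos {n : ℕ} (hn : 1 ≤ n) {R : Finset Cell} (h : IsRibbon n R) :
    ∃ mu la, Adds n (ribbonPos n R) mu la ∧ R = la.cells \ mu.cells := by
  obtain ⟨p, mu, la, h1, rfl⟩ := h.exists_adds hn
  exact ⟨mu, la, by rwa [h1.ribbonPos hn], rfl⟩

/-- The topright-most square of a ribbon is its square of largest content. -/
theorem Adds.topRight_iff {n : ℕ} (hn : 1 ≤ n) {p : ℤ} {mu la : YoungDiagram} (h : Adds n p mu la)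
    (c : Cell) : TopRightCell (la.cells \ mu.cells) c ↔ c = rimCell mu (p + n) := by
  have hanti := profile_antitone mu
  have hmono : Monotone (fun d => profile mu d + d) :=
    monotone_int_of_le_succ (fun d => by
      have := profile_le_succ mu d
      show profile mu d + d ≤ profile mu (d + 1) + (d + 1); omega)
  have htop : TopRightCell (la.cells \ mu.cells) (rimCell mu (p + n)) := by
    refine ⟨h.rimCell_mem (by omega) le_rfl, fun e he => ?_⟩
    obtain ⟨e1, e2, e3⟩ := h.eq_rimCell he
    have m1 := hanti e2
    have m2 := hmono e2
    simp only at m2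
    rw [e3]
    simp only [rimCell]
    refine ⟨by omega, fun _ => by omega⟩
  constructor
  · rintro ⟨hc, hc'⟩
    obtain ⟨k1, k2⟩ := hc' _ htop.1
    obtain ⟨l1, l2⟩ := htop.2 c hc
    have e1 : c.2 = (rimCell mu (p + n)).2 := le_antisymm l1 k1
    exact Prod.ext (le_antisymm (k2 e1.symm) (l2 e1)) e1
  · rintro rfl
    exact htop

end

noncomputable section

/-! ### Horizontal ribbon strips as increasing sequences of bead moves -/

/-- The tilings exhibiting `mu / ka` as a horizontal `n`-ribbon strip. -/
def stripTilings (n : ℕ) (ka mu : YoungDiagram) : Finset (Finset (Finset Cell)) :=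
  ((mu.cells \ ka.cells).powerset.powerset).filter
    (fun T => IsHStripTiling n (mu.cells \ ka.cells) T)

theorem tile_subset {n : ℕ} {S : Finset Cell} {T : Finset (Finset Cell)} (h : IsTilingOf n S T)
    {R : Finset Cell} (hR : R ∈ T) : R ⊆ S := by
  rw [← h.2.2]
  exact Finset.subset_biUnion_of_mem id hR

theorem mem_stripTilings {n : ℕ} {ka mu : YoungDiagram} {T : Finset (Finset Cell)} :
    T ∈ stripTilings n ka mu ↔ IsHStripTiling n (mu.cells \ ka.cells) T := by
  unfold stripTilings
  rw [Finset.mem_filter, and_iff_right_iff_imp]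
  intro h
  rw [Finset.mem_powerset]
  intro R hR
  exact Finset.mem_powerset.2 (tile_subset h.1 hR)

/-- The tilings exhibiting `mu / ka` as a horizontal `n`-ribbon strip, all of whose ribbons sit at
positions `≥ a`. -/
def tilingsFrom (n : ℕ) (a : ℤ) (ka mu : YoungDiagram) : Finset (Finset (Finset Cell)) :=
  (stripTilings n ka mu).filter (fun T => ∀ R ∈ T, a ≤ ribbonPos n R)

/-- The weight `∑ q ^ spin * y ^ (number of ribbons)` of `mu / ka` as a horizontal `n`-ribbon
strip. It is zero when `mu / ka` is not such a strip. -/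
def stripW {A : Type*} [CommRing A] (n : ℕ) (q y : A) (ka mu : YoungDiagram) : A :=
  if ka ≤ mu then ∑ T ∈ stripTilings n ka mu, q ^ tilingSpin T * y ^ T.card else 0

/-- The part of `stripW` that comes from ribbons at positions `≥ a`. -/
def stripWFrom {A : Type*} [CommRing A] (n : ℕ) (q y : A) (a : ℤ) (ka mu : YoungDiagram) : A :=
  if ka ≤ mu then ∑ T ∈ tilingsFrom n a ka mu, q ^ tilingSpin T * y ^ T.card else 0

theorem exists_tile {n : ℕ} {S : Finset Cell} {T : Finset (Finset Cell)} (h : IsTilingOf n S T)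
    {c : Cell} (hc : c ∈ S) : ∃ R ∈ T, c ∈ R := by
  rw [← h.2.2] at hc
  simpa using hc

theorem rimCell_mem_skew {ka mu : YoungDiagram} {d : ℤ} (h : profile ka d < profile mu d) :
    rimCell ka d ∈ mu.cells \ ka.cells := by
  rw [show rimCell ka d = ((rimCell ka d).1, (rimCell ka d).2) from rfl, mem_skew_iff,
    rimCell_content, rimCell_fst]
  omega

/-- In a horizontal ribbon strip, a ribbon of minimal position can be added first. -/
theorem first_ribbon {n : ℕ} (hn : 1 ≤ n) {ka mu : YoungDiagram} (hle : ka ≤ mu)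
    {T : Finset (Finset Cell)}
    (hT : IsHStripTiling n (mu.cells \ ka.cells) T) {a : ℤ}
    (ha : ∀ R ∈ T, a ≤ ribbonPos n R) {R : Finset Cell} (hR : R ∈ T) (hRa : ribbonPos n R = a) :
    ∃ la, Adds n a ka la ∧ R = la.cells \ ka.cells ∧ la ≤ mu := by
  obtain ⟨mu', la', hadd, hReq⟩ := (hT.1.1 R hR).exists_adds_pos hn
  rw [hRa] at hadd
  have hRS := tile_subset hT.1 hR
  -- The squares of `R` lie in `mu / ka`.
  have hmem : ∀ d, a < d → d ≤ a + n → profile ka d ≤ profile mu' d ∧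
      profile mu' d < profile mu d := by
    intro d h1 h2
    have := hRS (hReq ▸ hadd.rimCell_mem h1 h2)
    rw [show rimCell mu' d = ((rimCell mu' d).1, (rimCell mu' d).2) from rfl, mem_skew_iff,
      rimCell_content, rimCell_fst] at this
    exact this
  -- The northern condition at `R` says that nothing of the strip lies above its last square.
  have hnorth : profile ka (a + n + 1) = profile mu' (a + n) := by
    have hN := hT.2 R hR (rimCell mu' (a + n)) (by rw [hReq, hadd.topRight_iff hn])
    obtain ⟨m1, m2⟩ := hmem (a + n) (by omega) le_rfl
    have hs := profile_succ_le ka (a + n)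
    have hs' := profile_le_succ mu (a + n)
    have hk := profile_nonneg ka (a + n + 1)
    have hc := rimCell_content mu' (a + n)
    have hf := rimCell_fst mu' (a + n)
    rcases hN with hN | hN
    · omega
    · by_contra hcon
      apply hN
      rw [mem_skew_iff]
      have e : ((((rimCell mu' (a + n)).2 : ℕ) : ℤ) - (((rimCell mu' (a + n)).1 - 1 : ℕ) : ℤ)) =
          a + n + 1 := by omega
      rw [e]
      omega
  have hrim : ∀ d, a < d → d ≤ a + n → profile mu' d = profile ka d := by
    intro d h1 h2
    by_contra hcon
    obtain ⟨m1, m2⟩ := hmem d h1 h2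
    obtain ⟨R', hR', hdR'⟩ := exists_tile hT.1
      (rimCell_mem_skew (show profile ka d < profile mu d by omega))
    obtain ⟨mu2, la2, hadd2, hReq2⟩ := (hT.1.1 R' hR').exists_adds_pos hn
    have hpos := ha R' hR'
    set p' := ribbonPos n R' with hp'
    have hc2 : content (rimCell ka d) = d := rimCell_content ka d
    rw [hReq2] at hdR'
    obtain ⟨k1, k2, k3⟩ := hadd2.eq_rimCell hdR'
    rw [hc2] at k1 k2 k3
    have hstart : profile mu2 d = profile ka d := by
      rw [← rimCell_fst, ← k3, rimCell_fst]
    have hne : R ≠ R' := by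
      rintro rfl
      have : p' = a := hRa
      have hx := hadd.rimCell_mem h1 h2
      rw [← hReq, hReq2] at hx
      have hx2 := (hadd2.eq_rimCell hx).2.2
      have hx3 : content (rimCell mu' d) = d := rimCell_content mu' d
      rw [hx3] at hx2
      have := rimCell_fst mu' d
      rw [hx2, rimCell_fst] at this
      omega
    have hdisj : Disjoint R R' := hT.1.2.1 hR hR' hne
    -- `R'` starts above `R` and the two ribbons cannot cross, so it ends above `R`.
    have hstay : ∀ k : ℕ, d + k ≤ a + n → profile mu2 (d + k) < profile mu' (d + k) := by
      intro k
      induction k with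
      | zero => intro _; simp only [Nat.cast_zero, add_zero]; omega
      | succ k ih =>
        intro hk
        push_cast at hk
        have ih' := ih (by omega)
        have e : d + ((k + 1 : ℕ) : ℤ) = d + k + 1 := by push_cast; ring
        rw [e]
        have s1 := profile_succ_le mu2 (d + k)
        have s2 := profile_le_succ mu' (d + k)
        rcases lt_or_ge (profile mu2 (d + k + 1)) (profile mu' (d + k + 1)) with hlt | hge
        · exact hlt
        · exfalso
          have heq : profile mu2 (d + k + 1) = profile mu' (d + k + 1) := by omega
          have x1 := hadd.rimCell_mem (d := d + k + 1) (by omega) (by omega)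
          have x2 := hadd2.rimCell_mem (d := d + k + 1) (by omega) (by omega)
          rw [← hReq] at x1
          rw [← hReq2] at x2
          have : rimCell mu2 (d + k + 1) = rimCell mu' (d + k + 1) := by
            unfold rimCell; rw [heq]
          rw [this] at x2
          exact Finset.disjoint_left.1 hdisj x1 x2
    have hend := hstay (a + n - d).toNat (by omega)
    have e : d + ((a + n - d).toNat : ℤ) = a + n := by omega
    rw [e] at hend
    have hx := hadd2.rimCell_mem (d := a + n) (by omega) (by omega)
    rw [← hReq2] at hx
    have hx' := tile_subset hT.1 hR' hx
    rw [show rimCell mu2 (a + n) = ((rimCell mu2 (a + n)).1, (rimCell mu2 (a + n)).2) from rfl,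
      mem_skew_iff, rimCell_content, rimCell_fst] at hx'
    have := profile_succ_le ka (a + n)
    omega
  have hA : profile ka (a + 1) < profile ka a := by
    have s1 := profile_succ_le ka a
    by_contra hcon
    have s2 := profile_succ_le mu a
    have s3 := hmem (a + 1) (by omega) (by omega)
    obtain ⟨R', hR', hdR'⟩ := exists_tile hT.1
      (rimCell_mem_skew (show profile ka a < profile mu a by omega))
    obtain ⟨mu2, la2, hadd2, hReq2⟩ := (hT.1.1 R' hR').exists_adds_pos hn
    have hpos := ha R' hR'
    rw [hReq2] at hdR'
    have k := (hadd2.eq_rimCell hdR').1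
    have hc : content (rimCell ka a) = a := rimCell_content ka a
    rw [hc] at k
    omega
  have hB : profile ka (a + n + 1) = profile ka (a + n) := by
    rw [hnorth, hrim (a + n) (by omega) le_rfl]
  obtain ⟨la, hla⟩ := exists_adds hA hB
  refine ⟨la, hla, ?_, ?_⟩
  · rw [hReq, hadd.skew_eq_image, hla.skew_eq_image]
    apply Finset.image_congr
    intro d hd
    rw [Finset.mem_coe, Finset.mem_Ioc] at hd
    unfold rimCell
    rw [hrim d hd.1 hd.2]
  · rw [le_iff_profile]
    intro d
    rw [hla d]
    split_ifs with hd
    · have := hmem d hd.1 hd.2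
      have := hrim d hd.1 hd.2
      omega
    · have := le_iff_profile.1 hle d
      omega


theorem mem_tilingsFrom {n : ℕ} {a : ℤ} {ka mu : YoungDiagram} {T : Finset (Finset Cell)} :
    T ∈ tilingsFrom n a ka mu ↔ IsHStripTiling n (mu.cells \ ka.cells) T ∧
      ∀ R ∈ T, a ≤ ribbonPos n R := by
  unfold tilingsFrom
  rw [Finset.mem_filter, mem_stripTilings]

/-- Removing the ribbon at position `a` from a strip whose ribbons sit at positions `≥ a` leaves a strip
with positions `> a`. -/
theorem erase_first {n : ℕ} (hn : 1 ≤ n) {a : ℤ} {ka la mu : YoungDiagram} (hle : ka ≤ mu)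
    (hadd : Adds n a ka la) {T : Finset (Finset Cell)} (hT : T ∈ tilingsFrom n a ka mu)
    (hR : la.cells \ ka.cells ∈ T) :
    T.erase (la.cells \ ka.cells) ∈ tilingsFrom n (a + 1) la mu := by
  rw [mem_tilingsFrom] at hT ⊢
  obtain ⟨hT, hpos⟩ := hT
  have hsub : mu.cells \ la.cells ⊆ mu.cells \ ka.cells :=
    Finset.sdiff_subset_sdiff le_rfl hadd.le
  refine ⟨⟨⟨?_, ?_, ?_⟩, ?_⟩, ?_⟩
  · intro R' hR'
    exact hT.1.1 R' (Finset.mem_of_mem_erase hR')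
  · intro A hA B hB hne
    exact hT.1.2.1 (Finset.mem_of_mem_erase hA) (Finset.mem_of_mem_erase hB) hne
  · ext c
    simp only [Finset.mem_biUnion, id, Finset.mem_sdiff]
    constructor
    · rintro ⟨R', hR', hc⟩
      have h1 := tile_subset hT.1 (Finset.mem_of_mem_erase hR') hc
      rw [Finset.mem_sdiff] at h1
      refine ⟨h1.1, fun hcl => ?_⟩
      have hd := hT.1.2.1 hR (Finset.mem_of_mem_erase hR') (Finset.ne_of_mem_erase hR').symm
      exact Finset.disjoint_left.1 hd (Finset.mem_sdiff.2 ⟨hcl, h1.2⟩) hc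
    · rintro ⟨h1, h2⟩
      obtain ⟨R', hR', hc⟩ := exists_tile hT.1 (hsub (Finset.mem_sdiff.2 ⟨h1, h2⟩))
      refine ⟨R', Finset.mem_erase.2 ⟨?_, hR'⟩, hc⟩
      rintro rfl
      exact h2 (Finset.mem_sdiff.1 hc).1
  · intro R' hR' c hc
    rcases hT.2 R' (Finset.mem_of_mem_erase hR') c hc with h | h
    · exact Or.inl h
    · exact Or.inr (fun h' => h (hsub h'))
  · intro R' hR'
    have hm := Finset.mem_of_mem_erase hR'
    have h1 := hpos R' hm
    rcases h1.eq_or_lt with h1 | h1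
    · exfalso
      obtain ⟨la', hla', hReq, -⟩ := first_ribbon hn hle hT hpos hm h1.symm
      rw [hla'.unique hadd] at hReq
      exact Finset.ne_of_mem_erase hR' hReq
    · omega

/-- Inverse of `erase_first`: a ribbon at position `a` may precede a strip with positions `> a`. -/
theorem insert_first {n : ℕ} (hn : 1 ≤ n) {a : ℤ} {ka la mu : YoungDiagram} (hle : la ≤ mu)
    (hadd : Adds n a ka la) {T : Finset (Finset Cell)} (hT : T ∈ tilingsFrom n (a + 1) la mu) :
    la.cells \ ka.cells ∉ T ∧ insert (la.cells \ ka.cells) T ∈ tilingsFrom n a ka mu := by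
  rw [mem_tilingsFrom] at hT
  rw [mem_tilingsFrom]
  obtain ⟨hT, hpos⟩ := hT
  have hsub : mu.cells \ la.cells ⊆ mu.cells \ ka.cells :=
    Finset.sdiff_subset_sdiff le_rfl hadd.le
  have hkl : ka.cells ⊆ la.cells := hadd.le
  have hlm : la.cells ⊆ mu.cells := hle
  have hdis : ∀ R' ∈ T, Disjoint (la.cells \ ka.cells) R' := by
    intro R' hR'
    rw [Finset.disjoint_left]
    intro c hc hc'
    exact (Finset.mem_sdiff.1 (tile_subset hT.1 hR' hc')).2 (Finset.mem_sdiff.1 hc).1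
  refine ⟨?_, ⟨⟨?_, ?_, ?_⟩, ?_⟩, ?_⟩
  · intro hmem
    have := hpos _ hmem
    rw [hadd.ribbonPos hn] at this
    omega
  · intro R' hR'
    rcases Finset.mem_insert.1 hR' with rfl | hR'
    · exact hadd.isRibbon
    · exact hT.1.1 R' hR'
  · intro A hA B hB hne
    rcases Finset.mem_insert.1 hA with rfl | hA <;> rcases Finset.mem_insert.1 hB with rfl | hB
    · exact absurd rfl hne
    · exact hdis _ hB
    · exact (hdis _ hA).symm
    · exact hT.1.2.1 hA hB hne
  · rw [Finset.biUnion_insert, hT.1.2.2, id]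
    ext c
    simp only [Finset.mem_union, Finset.mem_sdiff]
    have := @hkl c
    have := @hlm c
    tauto
  · intro R' hR' c hc
    rcases Finset.mem_insert.1 hR' with rfl | hR'
    · rw [hadd.topRight_iff hn] at hc
      subst hc
      rcases Nat.eq_zero_or_pos (rimCell ka (a + n)).1 with h0 | h0
      · exact Or.inl h0
      · right
        rw [mem_skew_iff]
        have h1 := rimCell_content ka (a + n)
        have h2 := rimCell_fst ka (a + n)
        have h3 := hadd.eq hn
        have e : ((((rimCell ka (a + n)).2 : ℕ) : ℤ) - (((rimCell ka (a + n)).1 - 1 : ℕ) : ℤ)) =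
          a + n + 1 := by omega
        rw [e]
        omega
    · have hp := hpos R' hR'
      obtain ⟨mu2, la2, hadd2, hReq2⟩ := (hT.1.1 R' hR').exists_adds_pos hn
      have hN := hT.2 R' hR' c hc
      rcases hN with hN | hN
      · exact Or.inl hN
      · by_cases h00 : c.1 = 0
        · exact Or.inl h00
        right
        intro hmem
        have hla : (c.1 - 1, c.2) ∈ la.cells \ ka.cells := by
          simp only [Finset.mem_sdiff] at hmem hN ⊢
          tauto
        have h1 := (hadd.eq_rimCell hla).2.1
        rw [hReq2, hadd2.topRight_iff hn] at hc
        have h2 := rimCell_content mu2 (ribbonPos n R' + n)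
        rw [← hc] at h2
        simp only [content] at h1
        omega
  · intro R' hR'
    rcases Finset.mem_insert.1 hR' with rfl | hR'
    · rw [hadd.ribbonPos hn]
    · have := hpos R' hR'; omega

theorem tilingsFrom_split {n : ℕ} (a : ℤ) (ka mu : YoungDiagram) :
    (tilingsFrom n a ka mu).filter (fun T => ¬ ∃ R ∈ T, ribbonPos n R = a) =
      tilingsFrom n (a + 1) ka mu := by
  ext T
  rw [Finset.mem_filter, mem_tilingsFrom, mem_tilingsFrom]
  push Not
  constructor
  · rintro ⟨⟨h1, h2⟩, h3⟩
    refine ⟨h1, fun R hR => ?_⟩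
    have := h2 R hR
    have := h3 R hR
    omega
  · rintro ⟨h1, h2⟩
    refine ⟨⟨h1, fun R hR => ?_⟩, fun R hR => ?_⟩ <;> have := h2 R hR <;> omega

section

variable {A : Type*} [CommRing A] {n : ℕ} (q y : A)

theorem stripWFrom_of_not {a : ℤ} {ka mu : YoungDiagram} (hn : 1 ≤ n)
    (h : ¬ ∃ la, Adds n a ka la) : stripWFrom n q y a ka mu = stripWFrom n q y (a + 1) ka mu := by
  unfold stripWFrom
  split_ifs with hle
  · rw [← tilingsFrom_split a, Finset.filter_true_of_mem]
    rintro T hT ⟨R, hR, hRa⟩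
    rw [mem_tilingsFrom] at hT
    obtain ⟨la, hla, -⟩ := first_ribbon hn hle hT.1 hT.2 hR hRa
    exact h ⟨la, hla⟩
  · rfl

/-- A strip with positions `≥ a` either has no ribbon at `a` or starts with the ribbon at `a`. -/
theorem stripWFrom_of_adds {a : ℤ} {ka la mu : YoungDiagram} (hn : 1 ≤ n)
    (h : Adds n a ka la) : stripWFrom n q y a ka mu = stripWFrom n q y (a + 1) ka mu +
      y * q ^ moveSpin n a ka * stripWFrom n q y (a + 1) la mu := by
  unfold stripWFrom
  by_cases hle : ka ≤ mu
  · rw [if_pos hle, if_pos hle, ← tilingsFrom_split a,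
      ← Finset.sum_filter_add_sum_filter_not _ (fun T => ∃ R ∈ T, ribbonPos n R = a), add_comm]
    congr 1
    split_ifs with hlm
    · rw [Finset.mul_sum]
      symm
      refine Finset.sum_bij' (fun T _ => insert (la.cells \ ka.cells) T)
        (fun T _ => T.erase (la.cells \ ka.cells)) ?_ ?_ ?_ ?_ ?_
      · intro T hT
        rw [Finset.mem_filter]
        exact ⟨(insert_first hn hlm h hT).2, _, Finset.mem_insert_self _ _, h.ribbonPos hn⟩
      · intro T hT
        rw [Finset.mem_filter] at hT
        obtain ⟨hT, R, hR, hRa⟩ := hT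
        have hT' := mem_tilingsFrom.1 hT
        obtain ⟨la', hla, hReq, -⟩ := first_ribbon hn hle hT'.1 hT'.2 hR hRa
        rw [hla.unique h] at hReq
        exact erase_first hn hle h hT (hReq ▸ hR)
      · intro T hT
        exact Finset.erase_insert (insert_first hn hlm h hT).1
      · intro T hT
        rw [Finset.mem_filter] at hT
        obtain ⟨hT, R, hR, hRa⟩ := hT
        have hT' := mem_tilingsFrom.1 hT
        obtain ⟨la', hla, hReq, -⟩ := first_ribbon hn hle hT'.1 hT'.2 hR hRa
        rw [hla.unique h] at hReq
        exact Finset.insert_erase (hReq ▸ hR)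
      · intro T hT
        have h1 := (insert_first hn hlm h hT).1
        rw [Finset.card_insert_of_notMem h1]
        unfold tilingSpin
        rw [Finset.sum_insert h1, h.ribbonSpin hn]
        ring
    · rw [mul_zero, Finset.filter_false_of_mem, Finset.sum_empty]
      rintro T hT ⟨R, hR, hRa⟩
      have hT' := mem_tilingsFrom.1 hT
      obtain ⟨la', hla, -, hlm'⟩ := first_ribbon hn hle hT'.1 hT'.2 hR hRa
      rw [hla.unique h] at hlm'
      exact hlm hlm'
  · rw [if_neg hle, if_neg hle, if_neg (fun hlm => hle (h.le.trans hlm))]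
    ring

/-- All ribbons of `mu / ka` sit at positions `≥ -|mu|`. -/
theorem stripWFrom_low {a : ℤ} {ka mu : YoungDiagram} (hn : 1 ≤ n) (ha : a ≤ -(mu.card : ℤ)) :
    stripWFrom n q y a ka mu = stripW n q y ka mu := by
  unfold stripWFrom stripW
  split_ifs with hle
  · unfold tilingsFrom
    rw [Finset.filter_true_of_mem]
    intro T hT R hR
    rw [mem_stripTilings] at hT
    obtain ⟨mu2, la2, hadd2, hReq2⟩ := (hT.1.1 R hR).exists_adds_pos hn
    have h1 := hadd2.rimCell_mem (d := ribbonPos n R + 1) (by omega) (by omega)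
    have h2 := rimCell_content mu2 (ribbonPos n R + 1)
    rw [← hReq2] at h1
    have h3 := (Finset.mem_sdiff.1 (tile_subset hT.1 hR h1)).1
    have h4 := lt_card_of_mem (la := mu) (i := (rimCell mu2 (ribbonPos n R + 1)).1)
      (j := (rimCell mu2 (ribbonPos n R + 1)).2) h3
    omega
  · rfl

/-- No ribbon of `mu / ka` sits at a position `≥ |mu|`. -/
theorem stripWFrom_high {a : ℤ} {ka mu : YoungDiagram} (hn : 1 ≤ n) (ha : (mu.card : ℤ) ≤ a) :
    stripWFrom n q y a ka mu = if ka = mu then 1 else 0 := by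
  have hempty : ∀ T ∈ tilingsFrom n a ka mu, T = ∅ := by
    intro T hT
    rw [mem_tilingsFrom] at hT
    rw [Finset.eq_empty_iff_forall_notMem]
    intro R hR
    have h0 := hT.2 R hR
    obtain ⟨mu2, la2, hadd2, hReq2⟩ := (hT.1.1.1 R hR).exists_adds_pos hn
    have h1 := hadd2.rimCell_mem (d := ribbonPos n R + 1) (by omega) (by omega)
    have h2 := rimCell_content mu2 (ribbonPos n R + 1)
    rw [← hReq2] at h1
    have h3 := (Finset.mem_sdiff.1 (tile_subset hT.1.1 hR h1)).1
    have h4 := lt_card_of_mem (la := mu) (i := (rimCell mu2 (ribbonPos n R + 1)).1)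
      (j := (rimCell mu2 (ribbonPos n R + 1)).2) h3
    omega
  unfold stripWFrom
  by_cases hkm : ka = mu
  · subst hkm
    rw [if_pos le_rfl, if_pos rfl]
    have : tilingsFrom n a ka ka = {∅} := by
      ext T
      rw [Finset.mem_singleton]
      refine ⟨hempty T, ?_⟩
      rintro rfl
      rw [mem_tilingsFrom]
      simp [IsHStripTiling, IsTilingOf, NorthernCond]
    rw [this]
    simp [tilingSpin]
  · rw [if_neg hkm]
    split_ifs with hle
    · apply Finset.sum_eq_zero
      intro T hT
      exfalso
      have h1 := hempty T hT
      subst h1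
      rw [mem_tilingsFrom] at hT
      have h2 := hT.1.1.2.2
      rw [Finset.biUnion_empty] at h2
      have h3 : mu.cells ⊆ ka.cells := Finset.sdiff_eq_empty_iff_subset.1 h2.symm
      exact hkm (le_antisymm hle h3)
    · rfl

end

end

noncomputable section

/-! ### Elementary bead moves as operators, and their exchange relations -/

theorem exists_adds_iff {n : ℕ} (hn : 1 ≤ n) {p : ℤ} {mu : YoungDiagram} :
    (∃ la, Adds n p mu la) ↔ profile mu (p + 1) < profile mu p ∧
      profile mu (p + n + 1) = profile mu (p + n) :=
  ⟨fun ⟨_, h⟩ => ⟨h.lt hn, h.eq hn⟩, fun h => exists_adds h.1 h.2⟩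

theorem Adds.eq_left {n : ℕ} (hn : 1 ≤ n) {p : ℤ} {mu la : YoungDiagram} (h : Adds n p mu la) :
    profile la (p + 1) = profile la p := by
  have h1 := h.inside (d := p + 1) (by omega) (by omega)
  have h2 := h.outside (d := p) (by omega)
  have := h.lt hn
  have := profile_le_succ mu p
  have := profile_succ_le la p
  omega

theorem Adds.lt_right {n : ℕ} (hn : 1 ≤ n) {p : ℤ} {mu la : YoungDiagram} (h : Adds n p mu la) :
    profile la (p + n + 1) < profile la (p + n) := by
  have h1 := h.inside (d := p + n) (by omega) (by omega)
  have h2 := h.outside (d := p + n + 1) (by omega)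
  have := h.eq hn
  omega

theorem exists_adds_left_iff {n : ℕ} (hn : 1 ≤ n) {p : ℤ} {la : YoungDiagram} :
    (∃ mu, Adds n p mu la) ↔ profile la (p + 1) = profile la p ∧
      profile la (p + n + 1) < profile la (p + n) :=
  ⟨fun ⟨_, h⟩ => ⟨h.eq_left hn, h.lt_right hn⟩, fun h => exists_adds_left hn h.1 h.2⟩

/-- Moves at distinct positions: an addition followed by a removal can be done in the other
order. -/
theorem square_down {n : ℕ} (hn : 1 ≤ n) {p r : ℤ} (hpr : r ≠ p) {la lp nu : YoungDiagram}
    (h1 : Adds n p la lp) (h2 : Adds n r nu lp) : ∃ ka, Adds n r ka la ∧ Adds n p ka nu := by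
  have a1 := h2.eq_left hn
  have a2 := h2.lt_right hn
  have b1 := h1.eq_left hn
  have b2 := h1.lt_right hn
  have b3 := h1.lt hn
  have b4 := h1.eq hn
  have b5 := profile_le_succ la p
  rw [h1, h1] at a1 a2
  have hne1 : r + n ≠ p := by rintro rfl; omega
  have hne2 : r ≠ p + n := by rintro rfl; omega
  obtain ⟨ka, hka⟩ := exists_adds_left hn (p := r) (la := la)
    (by split_ifs at a1 <;> omega) (by split_ifs at a2 <;> omega)
  refine ⟨ka, hka, fun d => ?_⟩
  have := hka d
  have := h1 d
  have := h2 d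
  omega

/-- Moves at distinct positions: a removal followed by an addition can be done in the other
order. -/
theorem square_up {n : ℕ} (hn : 1 ≤ n) {p r : ℤ} (hpr : r ≠ p) {ka la nu : YoungDiagram}
    (h1 : Adds n r ka la) (h2 : Adds n p ka nu) : ∃ lp, Adds n p la lp ∧ Adds n r nu lp := by
  have a1 := h2.lt hn
  have a2 := h2.eq hn
  have b1 := h1.lt hn
  have b2 := h1.eq hn
  have hne1 : r + n ≠ p := by rintro rfl; omega
  have hne2 : r ≠ p + n := by rintro rfl; omega
  obtain ⟨lp, hlp⟩ := exists_adds (n := n) (p := p) (mu := la)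
    (by rw [h1, h1]; split_ifs <;> omega) (by rw [h1, h1]; split_ifs <;> omega)
  refine ⟨lp, hlp, fun d => ?_⟩
  have := hlp d
  have := h1 d
  have := h2 d
  omega

theorem moveSpin_square {n : ℕ} (hn : 1 ≤ n) {p r : ℤ}
    {ka la nu : YoungDiagram} (h1 : Adds n r ka la) (h2 : Adds n p ka nu) :
    moveSpin n p la + moveSpin n r nu = moveSpin n r ka + moveSpin n p ka := by
  have an := profile_antitone
  have m1 : profile ka (p + n) ≤ profile ka (p + 1) := an ka (by omega)
  have m2 : profile ka (r + n) ≤ profile ka (r + 1) := an ka (by omega)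
  have m3 : profile la (p + n) ≤ profile la (p + 1) := an la (by omega)
  have m4 : profile nu (r + n) ≤ profile nu (r + 1) := an nu (by omega)
  have e1 := h1 (p + 1)
  have e2 := h1 (p + n)
  have e3 := h2 (r + 1)
  have e4 := h2 (r + n)
  unfold moveSpin
  split_ifs at e1 e2 e3 e4 <;> omega

section

variable {A : Type*} [CommRing A] (n : ℕ) (q x : A)

/-- The identity plus the operator adding an `n`-ribbon at position `p`, if possible, with weight
`x * q ^ spin`. -/
def addOp (p : ℤ) : Module.End A (YoungDiagram →₀ A) :=
  Finsupp.linearCombination A (fun la => Finsupp.single la 1 +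
    if h : ∃ lp, Adds n p la lp then Finsupp.single h.choose (x * q ^ moveSpin n p la) else 0)

/-- The identity plus the operator removing an `n`-ribbon at position `p`, if possible, with weight
`x * q ^ spin`. -/
def remOp (p : ℤ) : Module.End A (YoungDiagram →₀ A) :=
  Finsupp.linearCombination A (fun la => Finsupp.single la 1 +
    if h : ∃ ka, Adds n p ka la then
      Finsupp.single h.choose (x * q ^ moveSpin n p h.choose) else 0)

/-- The diagonal operator with eigenvalues `f`. -/
def diagOp (f : YoungDiagram → A) : Module.End A (YoungDiagram →₀ A) :=
  Finsupp.linearCombination A (fun la => Finsupp.single la (f la))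

theorem addOp_of_adds {p : ℤ} {la lp : YoungDiagram} (h : Adds n p la lp) (c : A) :
    addOp n q x p (Finsupp.single la c) =
      Finsupp.single la c + Finsupp.single lp (c * (x * q ^ moveSpin n p la)) := by
  have hex : ∃ lp, Adds n p la lp := ⟨lp, h⟩
  rw [addOp, Finsupp.linearCombination_single, dif_pos hex, hex.choose_spec.unique h, smul_add,
    Finsupp.smul_single, Finsupp.smul_single, smul_eq_mul, smul_eq_mul, mul_one]

theorem addOp_of_not {p : ℤ} {la : YoungDiagram} (h : ¬ ∃ lp, Adds n p la lp) (c : A) :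
    addOp n q x p (Finsupp.single la c) = Finsupp.single la c := by
  rw [addOp, Finsupp.linearCombination_single, dif_neg h]
  simp

theorem remOp_of_adds {p : ℤ} {ka la : YoungDiagram} (h : Adds n p ka la) (c : A) :
    remOp n q x p (Finsupp.single la c) =
      Finsupp.single la c + Finsupp.single ka (c * (x * q ^ moveSpin n p ka)) := by
  have hex : ∃ ka, Adds n p ka la := ⟨ka, h⟩
  rw [remOp, Finsupp.linearCombination_single, dif_pos hex, hex.choose_spec.unique_left h, smul_add,
    Finsupp.smul_single, Finsupp.smul_single, smul_eq_mul, smul_eq_mul, mul_one]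

theorem remOp_of_not {p : ℤ} {la : YoungDiagram} (h : ¬ ∃ ka, Adds n p ka la) (c : A) :
    remOp n q x p (Finsupp.single la c) = Finsupp.single la c := by
  rw [remOp, Finsupp.linearCombination_single, dif_neg h]
  simp

theorem diagOp_single (f : YoungDiagram → A) (la : YoungDiagram) (c : A) :
    diagOp f (Finsupp.single la c) = Finsupp.single la (c * f la) := by
  rw [diagOp, Finsupp.linearCombination_single]
  simp

theorem diagOp_apply (f : YoungDiagram → A) (v : YoungDiagram →₀ A) (la : YoungDiagram) :
    diagOp f v la = v la * f la := by
  induction v using Finsupp.induction_linear with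
  | zero => simp
  | add u w hu hw => simp only [map_add, Finsupp.add_apply, hu, hw, add_mul]
  | single mu c =>
    rw [diagOp_single, Finsupp.single_apply, Finsupp.single_apply]
    split_ifs with h <;> simp [h]

variable {n}

/-- Additions and removals at distinct positions commute. -/
theorem remOp_addOp_comm (hn : 1 ≤ n) (y : A) {p r : ℤ} (hpr : r ≠ p) :
    remOp n q y r * addOp n q x p = addOp n q x p * remOp n q y r := by
  apply Finsupp.lhom_ext
  intro la c
  rw [Module.End.mul_apply, Module.End.mul_apply]
  by_cases hp : ∃ lp, Adds n p la lp <;> by_cases hr : ∃ ka, Adds n r ka la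
  · obtain ⟨lp, hlp⟩ := hp
    obtain ⟨ka, hka⟩ := hr
    rw [addOp_of_adds n q x hlp, remOp_of_adds n q y hka, map_add, map_add,
      remOp_of_adds n q y hka, addOp_of_adds n q x hlp]
    by_cases hnu : ∃ nu, Adds n p ka nu
    · obtain ⟨nu, hnu⟩ := hnu
      obtain ⟨lp', h1, h2⟩ := square_up hn hpr hka hnu
      obtain rfl := h1.unique hlp
      have hs := moveSpin_square hn hka hnu
      rw [remOp_of_adds n q y h2, addOp_of_adds n q x hnu]
      have : c * (x * q ^ moveSpin n p la) * (y * q ^ moveSpin n r nu) =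
          c * (y * q ^ moveSpin n r ka) * (x * q ^ moveSpin n p ka) := by
        calc _ = c * x * y * q ^ (moveSpin n p la + moveSpin n r nu) := by ring
          _ = c * x * y * q ^ (moveSpin n r ka + moveSpin n p ka) := by rw [hs]
          _ = _ := by ring
      rw [this]
      abel
    · have hnu' : ¬ ∃ nu, Adds n r nu lp := by
        rintro ⟨nu, h⟩
        obtain ⟨ka', h1, h2⟩ := square_down hn hpr hlp h
        obtain rfl := h1.unique_left hka
        exact hnu ⟨nu, h2⟩
      rw [remOp_of_not n q y hnu', addOp_of_not n q x hnu]
      abel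
  · obtain ⟨lp, hlp⟩ := hp
    have hnu' : ¬ ∃ nu, Adds n r nu lp := by
      rintro ⟨nu, h⟩
      obtain ⟨ka', h1, h2⟩ := square_down hn hpr hlp h
      exact hr ⟨ka', h1⟩
    rw [addOp_of_adds n q x hlp, remOp_of_not n q y hr, map_add, remOp_of_not n q y hr,
      remOp_of_not n q y hnu', addOp_of_adds n q x hlp]
  · obtain ⟨ka, hka⟩ := hr
    have hnu' : ¬ ∃ nu, Adds n p ka nu := by
      rintro ⟨nu, h⟩
      obtain ⟨lp, h1, h2⟩ := square_up hn hpr hka h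
      exact hp ⟨lp, h1⟩
    rw [addOp_of_not n q x hp, remOp_of_adds n q y hka, map_add, addOp_of_not n q x hp,
      addOp_of_not n q x hnu']
  · rw [addOp_of_not n q x hp, remOp_of_not n q y hr, addOp_of_not n q x hp]

/-- The factor `∏_{s ≤ k < n} (1 - q ^ (2 k) z)`. -/
def gFac (n : ℕ) (q z : A) (s : ℕ) : A := ∏ k ∈ Finset.Ico s n, (1 - q ^ (2 * k) * z)

theorem gFac_succ (z : A) {s : ℕ} (hs : s < n) :
    gFac n q z s = (1 - q ^ (2 * s) * z) * gFac n q z (s + 1) :=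
  Finset.prod_eq_prod_Ico_succ_bot hs _

/-- The number of beads of `la` in the window `[p, p + n)`. -/
def beadCount (n : ℕ) (p : ℤ) (la : YoungDiagram) : ℕ := (profile la p - profile la (p + n)).toNat

theorem Adds.beadCounts (hn : 1 ≤ n) {p : ℤ} {ka la : YoungDiagram} (h : Adds n p ka la) :
    moveSpin n p ka < n ∧ beadCount n p ka = moveSpin n p ka + 1 ∧
    beadCount n (p + 1) ka = moveSpin n p ka ∧ beadCount n p la = moveSpin n p ka ∧
    beadCount n (p + 1) la = moveSpin n p ka + 1 := by
  have h1 := h.lt hn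
  have h2 := h.eq hn
  have h3 := profile_le_succ ka p
  have h4 := profile_succ_le ka p
  have h5 : profile ka (p + n) ≤ profile ka (p + 1) := profile_antitone ka (by omega)
  have h6 := profile_le_add ka (p + 1) (n - 1)
  have e1 : p + 1 + ((n - 1 : ℕ) : ℤ) = p + n := by omega
  have e2 : p + 1 + (n : ℤ) = p + n + 1 := by ring
  rw [e1] at h6
  have i1 := h.inside (d := p + 1) (by omega) (by omega)
  have i2 := h.inside (d := p + n) (by omega) (by omega)
  have o1 := h.outside (d := p) (by omega)
  have o2 := h.outside (d := p + n + 1) (by omega)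
  unfold beadCount moveSpin
  rw [e2]
  omega

theorem beadCount_succ (hn : 1 ≤ n) {p : ℤ} {la : YoungDiagram} (h1 : ¬ ∃ lp, Adds n p la lp)
    (h2 : ¬ ∃ ka, Adds n p ka la) : beadCount n (p + 1) la = beadCount n p la := by
  rw [exists_adds_iff hn] at h1
  rw [exists_adds_left_iff hn] at h2
  have a1 := profile_succ_le la p
  have a2 := profile_le_succ la p
  have a3 := profile_succ_le la (p + n)
  have a4 := profile_le_succ la (p + n)
  unfold beadCount
  have e2 : p + 1 + (n : ℤ) = p + n + 1 := by ring
  rw [e2]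
  omega

/-- The local exchange relation between adding and removing a ribbon at the same position.
The diagonal factors depend on the number of beads in the two windows of length `n` starting at
`p + 1` and at `p`. -/
theorem local_exchange (hn : 1 ≤ n) (y : A) (p : ℤ) :
    remOp n q y p * diagOp (fun la => gFac n q (x * y) (beadCount n (p + 1) la)) *
        addOp n q x p =
      addOp n q x p * diagOp (fun la => gFac n q (x * y) (beadCount n p la)) *
        remOp n q y p := by
  apply Finsupp.lhom_ext
  intro la c
  simp only [Module.End.mul_apply]
  by_cases hp : ∃ lp, Adds n p la lp
  · obtain ⟨lp, hlp⟩ := hp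
    obtain ⟨b0, b1, b2, b3, b4⟩ := hlp.beadCounts hn
    have hr : ¬ ∃ ka, Adds n p ka la := by
      rw [exists_adds_left_iff hn]
      have := hlp.lt hn
      omega
    rw [addOp_of_adds n q x hlp, remOp_of_not n q y hr, map_add]
    simp only [diagOp_single, map_add]
    rw [remOp_of_not n q y hr, remOp_of_adds n q y hlp, addOp_of_adds n q x hlp, b1, b2, b4,
      gFac_succ q _ b0, add_left_comm, ← Finsupp.single_add, add_comm]
    congr 2 <;> ring
  · by_cases hr : ∃ ka, Adds n p ka la
    · obtain ⟨ka, hka⟩ := hr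
      obtain ⟨b0, b1, b2, b3, b4⟩ := hka.beadCounts hn
      rw [addOp_of_not n q x hp, remOp_of_adds n q y hka, map_add]
      simp only [diagOp_single, map_add]
      rw [remOp_of_adds n q y hka, addOp_of_not n q x hp, addOp_of_adds n q x hka, b1, b3, b4,
        gFac_succ q _ b0, add_left_comm, ← Finsupp.single_add, add_comm]
      congr 2 <;> ring
    · rw [addOp_of_not n q x hp, remOp_of_not n q y hr]
      simp only [diagOp_single]
      rw [addOp_of_not n q x hp, remOp_of_not n q y hr, beadCount_succ hn hp hr]

/-- Add ribbons at the positions `a, …, a + m - 1`, in this order. -/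
def upOp (n : ℕ) (q x : A) : ℤ → ℕ → Module.End A (YoungDiagram →₀ A)
  | _, 0 => 1
  | a, m + 1 => upOp n q x (a + 1) m * addOp n q x a

/-- Remove ribbons at the positions `a + m - 1, …, a`, in this order. -/
def downOp (n : ℕ) (q x : A) : ℤ → ℕ → Module.End A (YoungDiagram →₀ A)
  | _, 0 => 1
  | a, m + 1 => remOp n q x a * downOp n q x (a + 1) m

theorem remOp_upOp (hn : 1 ≤ n) (y : A) (m : ℕ) : ∀ {a r : ℤ}, r < a →
    remOp n q y r * upOp n q x a m = upOp n q x a m * remOp n q y r := by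
  induction m with
  | zero => intro a r _; rw [upOp, mul_one, one_mul]
  | succ m ih =>
    intro a r h
    rw [upOp, ← mul_assoc, ih (by omega), mul_assoc, mul_assoc,
      remOp_addOp_comm q x hn y (by omega)]

theorem downOp_addOp (hn : 1 ≤ n) (y : A) (m : ℕ) : ∀ {a r : ℤ}, r < a →
    downOp n q y a m * addOp n q x r = addOp n q x r * downOp n q y a m := by
  induction m with
  | zero => intro a r _; rw [downOp, mul_one, one_mul]
  | succ m ih =>
    intro a r h
    rw [downOp, mul_assoc, ih (by omega), ← mul_assoc, ← mul_assoc,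
      remOp_addOp_comm q x hn y (by omega)]

/-- The exchange relation over a whole window of positions. -/
theorem window_exchange (hn : 1 ≤ n) (y : A) (m : ℕ) : ∀ a : ℤ,
    downOp n q y a m * diagOp (fun la => gFac n q (x * y) (beadCount n (a + m) la)) *
        upOp n q x a m =
      upOp n q x a m * diagOp (fun la => gFac n q (x * y) (beadCount n a la)) *
        downOp n q y a m := by
  induction m with
  | zero => intro a; simp [upOp, downOp]
  | succ m ih =>
    intro a
    have h := ih (a + 1)
    have e : a + ((m + 1 : ℕ) : ℤ) = a + 1 + m := by push_cast; ring
    rw [e, upOp, downOp]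
    set Dg := diagOp (fun la => gFac n q (x * y) (beadCount n (a + 1 + m) la))
    set Dg1 := diagOp (fun la => gFac n q (x * y) (beadCount n (a + 1) la)) with hDg1
    set Dg0 := diagOp (fun la => gFac n q (x * y) (beadCount n a la))
    set U := upOp n q x (a + 1) m with hU
    set D := downOp n q y (a + 1) m with hD
    calc remOp n q y a * D * Dg * (U * addOp n q x a)
        = remOp n q y a * (D * Dg * U) * addOp n q x a := by simp only [mul_assoc]
      _ = (remOp n q y a * U) * Dg1 * (D * addOp n q x a) := by rw [h]; simp only [mul_assoc]
      _ = U * (remOp n q y a * Dg1 * addOp n q x a) * D := by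
        rw [hU, hD, remOp_upOp q x hn y m (by omega), downOp_addOp q x hn y m (by omega)]
        simp only [mul_assoc]
      _ = _ := by rw [local_exchange q x hn y a]; simp only [mul_assoc]; rfl

/-- The matrix entries of `upOp` are strip weights, once the window reaches beyond the diagram. -/
theorem addOp_entry (hn : 1 ≤ n) (m : ℕ) : ∀ {a : ℤ} {ka mu : YoungDiagram},
    (mu.card : ℤ) ≤ a + m →
    upOp n q x a m (Finsupp.single ka 1) mu = stripWFrom n q x a ka mu := by
  have hsc : ∀ (T : Module.End A (YoungDiagram →₀ A)) (la mu : YoungDiagram) (c : A),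
      T (Finsupp.single la c) mu = c * T (Finsupp.single la 1) mu := by
    intro T la mu c
    rw [show Finsupp.single la c = c • Finsupp.single la (1 : A) by simp, map_smul]
    rfl
  induction m with
  | zero =>
    intro a ka mu h
    rw [stripWFrom_high q x hn (by simpa using h), upOp, Module.End.one_apply,
      Finsupp.single_apply]
  | succ m ih =>
    intro a ka mu h
    push_cast at h
    rw [upOp, Module.End.mul_apply]
    by_cases hp : ∃ lp, Adds n a ka lp
    · obtain ⟨lp, hlp⟩ := hp
      rw [addOp_of_adds n q x hlp, map_add, Finsupp.add_apply, hsc _ lp, ih (by omega),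
        ih (by omega), stripWFrom_of_adds q x hn hlp, one_mul]
    · rw [addOp_of_not n q x hp, ih (by omega), stripWFrom_of_not q x hn hp]

theorem remOp_apply_of_adds (hn : 1 ≤ n) {p : ℤ} {ka la : YoungDiagram} (h : Adds n p ka la)
    (v : YoungDiagram →₀ A) :
    remOp n q x p v ka = v ka + x * q ^ moveSpin n p ka * v la := by
  have hkr : ¬ ∃ ka', Adds n p ka' ka := by
    rw [exists_adds_left_iff hn]
    have := h.lt hn
    omega
  induction v using Finsupp.induction_linear with
  | zero => simp
  | add u w hu hw => simp only [map_add, Finsupp.add_apply, hu, hw]; ring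
  | single mu c =>
    by_cases hr : ∃ ka', Adds n p ka' mu
    · obtain ⟨ka', hr⟩ := hr
      rw [remOp_of_adds n q x hr, Finsupp.add_apply]
      have e : mu = la ↔ ka' = ka :=
        ⟨fun e => by subst e; exact hr.unique_left h, fun e => by subst e; exact hr.unique h⟩
      simp only [Finsupp.single_apply, e]
      split_ifs with h1 h2 h2
      · subst h2; ring
      · ring
      · subst h2; ring
      · ring
    · have e : mu ≠ la := by rintro rfl; exact hr ⟨_, h⟩
      rw [remOp_of_not n q x hr, Finsupp.single_eq_of_ne e.symm (a := mu) (a' := la)]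
      ring

theorem remOp_apply_of_not {p : ℤ} {ka : YoungDiagram}
    (h : ¬ ∃ la, Adds n p ka la) (v : YoungDiagram →₀ A) : remOp n q x p v ka = v ka := by
  induction v using Finsupp.induction_linear with
  | zero => simp
  | add u w hu hw => simp only [map_add, Finsupp.add_apply, hu, hw]
  | single mu c =>
    by_cases hr : ∃ ka', Adds n p ka' mu
    · obtain ⟨ka', hr⟩ := hr
      have e : ka' ≠ ka := by rintro rfl; exact h ⟨_, hr⟩
      rw [remOp_of_adds n q x hr, Finsupp.add_apply, Finsupp.single_eq_of_ne e.symm (a := ka'),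
        add_zero]
    · rw [remOp_of_not n q x hr]

/-- The matrix entries of `downOp` are strip weights, once the window reaches beyond the diagram. -/
theorem remOp_entry (hn : 1 ≤ n) (m : ℕ) : ∀ {a : ℤ} {ka mu : YoungDiagram},
    (mu.card : ℤ) ≤ a + m →
    downOp n q x a m (Finsupp.single mu 1) ka = stripWFrom n q x a ka mu := by
  induction m with
  | zero =>
    intro a ka mu h
    rw [stripWFrom_high q x hn (by simpa using h), downOp, Module.End.one_apply,
      Finsupp.single_apply]
    simp only [eq_comm]
  | succ m ih =>
    intro a ka mu h
    push_cast at h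
    rw [downOp, Module.End.mul_apply]
    by_cases hp : ∃ lp, Adds n a ka lp
    · obtain ⟨lp, hlp⟩ := hp
      rw [remOp_apply_of_adds q x hn hlp, ih (by omega), ih (by omega),
        stripWFrom_of_adds q x hn hlp]
    · rw [remOp_apply_of_not q x hp, ih (by omega), stripWFrom_of_not q x hn hp]

end

end

noncomputable section

/-! ### The commutation relation between adding and removing horizontal ribbon strips -/

theorem finite_subs (la : YoungDiagram) : {ka : YoungDiagram | ka ≤ la}.Finite := by
  refine Set.Finite.of_finite_image (f := YoungDiagram.cells)
    ((Finset.finite_toSet la.cells.powerset).subset ?_) ?_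
  · rintro _ ⟨ka, hka, rfl⟩
    exact Finset.mem_coe.2 (Finset.mem_powerset.2 hka)
  · intro a _ b _ h
    exact YoungDiagram.ext h

theorem finite_lev (m : ℕ) : {mu : YoungDiagram | mu.card = m}.Finite := by
  refine Set.Finite.of_finite_image (f := YoungDiagram.cells)
    ((Finset.finite_toSet (Finset.range m ×ˢ Finset.range m).powerset).subset ?_) ?_
  · rintro _ ⟨mu, hmu, rfl⟩
    have hmu' : mu.card = m := hmu
    refine Finset.mem_coe.2 (Finset.mem_powerset.2 fun c hc => ?_)
    have := lt_card_of_mem (la := mu) (i := c.1) (j := c.2) hc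
    rw [Finset.mem_product, Finset.mem_range, Finset.mem_range]
    omega
  · intro a _ b _ h
    exact YoungDiagram.ext h

/-- The partitions contained in `la`. -/
def subs (la : YoungDiagram) : Finset YoungDiagram := (finite_subs la).toFinset

/-- The partitions of `m`. -/
def lev (m : ℕ) : Finset YoungDiagram := (finite_lev m).toFinset

theorem mem_subs {ka la : YoungDiagram} : ka ∈ subs la ↔ ka ≤ la := by simp [subs]

theorem mem_lev {m : ℕ} {mu : YoungDiagram} : mu ∈ lev m ↔ mu.card = m := by simp [lev]

theorem stripTilings_card {n : ℕ} {ka mu : YoungDiagram} (hle : ka ≤ mu)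
    {T : Finset (Finset Cell)} (hT : T ∈ stripTilings n ka mu) :
    mu.card = ka.card + n * T.card := by
  rw [mem_stripTilings] at hT
  have h1 : (T.biUnion id).card = T.card * n := by
    rw [show T.biUnion id = T.biUnion (fun A => A) from rfl, Finset.card_biUnion (fun A hA B hB hne => hT.1.2.1 hA hB hne)]
    rw [Finset.sum_congr rfl (fun R hR => (hT.1.1 R hR).1), Finset.sum_const, smul_eq_mul]
  rw [hT.1.2.2] at h1
  have h3 := Finset.card_sdiff_add_card_eq_card (show ka.cells ⊆ mu.cells from hle)
  change mu.cells.card = ka.cells.card + _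
  rw [mul_comm]
  omega

section

variable {A : Type*} [CommRing A] {n : ℕ} (q y : A)

theorem stripW_of_card (hn : 1 ≤ n) {ka mu : YoungDiagram} {k : ℕ}
    (h : mu.card = ka.card + n * k) : stripW n q y ka mu = y ^ k * stripW n q 1 ka mu := by
  unfold stripW
  split_ifs with hle
  · rw [Finset.mul_sum]
    refine Finset.sum_congr rfl fun T hT => ?_
    have h1 := stripTilings_card hle hT
    have h2 : T.card = k := Nat.eq_of_mul_eq_mul_left hn (by omega)
    rw [h2]
    ring
  · simp

variable {q y}

theorem card_of_stripW_ne {ka mu : YoungDiagram} (h : stripW n q y ka mu ≠ 0) :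
    ka ≤ mu ∧ ∃ k, mu.card = ka.card + n * k := by
  unfold stripW at h
  split_ifs at h with hle
  · obtain ⟨T, hT, -⟩ := Finset.exists_ne_zero_of_sum_ne_zero h
    exact ⟨hle, _, stripTilings_card hle hT⟩
  · exact absurd rfl h

variable (q y)

theorem map_stripW {B : Type*} [CommRing B] (f : A →+* B) (ka mu : YoungDiagram) :
    f (stripW n q y ka mu) = stripW n (f q) (f y) ka mu := by
  unfold stripW
  split_ifs <;> simp

theorem empty_mem_stripTilings {ka mu : YoungDiagram} (hle : ka ≤ mu) :
    ∅ ∈ stripTilings n ka mu ↔ ka = mu := by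
  rw [mem_stripTilings]
  constructor
  · intro h
    have h2 := h.1.2.2
    rw [Finset.biUnion_empty] at h2
    have h3 : mu.cells ⊆ ka.cells := Finset.sdiff_eq_empty_iff_subset.1 h2.symm
    exact le_antisymm hle h3
  · rintro rfl
    simp [IsHStripTiling, IsTilingOf, NorthernCond]

theorem stripW_self (hn : 1 ≤ n) (ka : YoungDiagram) : stripW n q y ka ka = 1 := by
  have h : stripTilings n ka ka = {∅} := by
    ext T
    rw [Finset.mem_singleton]
    constructor
    · intro hT
      have := stripTilings_card le_rfl hT
      have h0 : n * T.card = 0 := by omega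
      rcases Nat.mul_eq_zero.1 h0 with h0 | h0
      · omega
      · exact Finset.card_eq_zero.1 h0
    · rintro rfl
      exact (empty_mem_stripTilings le_rfl).2 rfl
  unfold stripW
  rw [if_pos le_rfl, h]
  simp [tilingSpin]

theorem stripW_card_eq (hn : 1 ≤ n) {ka mu : YoungDiagram} (h : mu.card = ka.card) :
    stripW n q y ka mu = if ka = mu then 1 else 0 := by
  split_ifs with he
  · subst he; exact stripW_self q y hn ka
  · unfold stripW
    rw [if_neg]
    intro hle
    exact he (YoungDiagram.ext (Finset.eq_of_subset_of_card_le hle h.le))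

theorem stripW_zero (hn : 1 ≤ n) {ka mu : YoungDiagram} :
    stripW n q 0 ka mu = if ka = mu then 1 else 0 := by
  split_ifs with he
  · subst he; exact stripW_self q 0 hn ka
  · unfold stripW
    split_ifs with hle
    · refine Finset.sum_eq_zero fun T hT => ?_
      rcases T.eq_empty_or_nonempty with rfl | hne
      · exact absurd ((empty_mem_stripTilings hle).1 hT) he
      · rw [zero_pow (Finset.card_ne_zero.2 hne), mul_zero]
    · rfl

theorem reach_of_stripWFrom_ne (hn : 1 ≤ n) (m : ℕ) : ∀ {a : ℤ} {ka mu : YoungDiagram},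
    (mu.card : ℤ) ≤ a + m → stripWFrom n q y a ka mu ≠ 0 →
    Relation.ReflTransGen (RibbonStep n) mu ka := by
  induction m with
  | zero =>
    intro a ka mu h hne
    rw [stripWFrom_high q y hn (by simpa using h)] at hne
    split_ifs at hne with he
    · subst he; exact .refl
    · exact absurd rfl hne
  | succ m ih =>
    intro a ka mu h hne
    push_cast at h
    by_cases hp : ∃ lp, Adds n a ka lp
    · obtain ⟨lp, hlp⟩ := hp
      rw [stripWFrom_of_adds q y hn hlp] at hne
      by_cases h1 : stripWFrom n q y (a + 1) ka mu = 0
      · have h2 : stripWFrom n q y (a + 1) lp mu ≠ 0 := by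
          intro h2
          rw [h1, h2] at hne
          simp at hne
        exact (ih (by omega) h2).tail ⟨hlp.le, hlp.isRibbon⟩
      · exact ih (by omega) h1
    · rw [stripWFrom_of_not q y hn hp] at hne
      exact ih (by omega) hne

variable {q y} in
theorem reach_of_stripW_ne (hn : 1 ≤ n) {ka mu : YoungDiagram} (h : stripW n q y ka mu ≠ 0) :
    Relation.ReflTransGen (RibbonStep n) mu ka := by
  rw [← stripWFrom_low q y hn (a := -(mu.card : ℤ)) le_rfl] at h
  exact reach_of_stripWFrom_ne q y hn (2 * mu.card) (by push_cast; omega) h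

theorem end_apply (T : Module.End A (YoungDiagram →₀ A)) (v : YoungDiagram →₀ A)
    (nu : YoungDiagram) : T v nu = ∑ mu ∈ v.support, v mu * T (Finsupp.single mu 1) nu := by
  conv_lhs => rw [← Finsupp.sum_single v, Finsupp.sum, map_sum, Finsupp.finsetSum_apply]
  refine Finset.sum_congr rfl fun mu _ => ?_
  rw [show Finsupp.single mu (v mu) = v mu • Finsupp.single mu (1 : A) by simp, map_smul]
  rfl

open Polynomial in
/-- The exponent of the formal variable counts the ribbons added by `upOp`. -/
theorem upOp_coeff (m : ℕ) : ∀ {a : ℤ} {ka mu : YoungDiagram} {i : ℕ},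
    (upOp n (C q) X a m (Finsupp.single ka 1) mu).coeff i ≠ 0 → mu.card = ka.card + n * i := by
  induction m with
  | zero =>
    intro a ka mu i h
    rw [upOp, Module.End.one_apply, Finsupp.single_apply] at h
    split_ifs at h with he
    · subst he
      rw [coeff_one] at h
      split_ifs at h with h0
      · subst h0; simp
      · exact absurd rfl h
    · simp at h
  | succ m ih =>
    intro a ka mu i h
    rw [upOp, Module.End.mul_apply] at h
    by_cases hp : ∃ lp, Adds n a ka lp
    · obtain ⟨lp, hlp⟩ := hp
      rw [addOp_of_adds n _ _ hlp, map_add, Finsupp.add_apply, coeff_add] at h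
      by_cases h1 : (upOp n (C q) X (a + 1) m (Finsupp.single ka 1) mu).coeff i = 0
      · rw [h1, zero_add, one_mul, show Finsupp.single lp ((X : A[X]) * C q ^ moveSpin n a ka) =
          ((X : A[X]) * C q ^ moveSpin n a ka) • Finsupp.single lp 1 by
            rw [Finsupp.smul_single, smul_eq_mul, mul_one], map_smul, Finsupp.smul_apply,
          smul_eq_mul, mul_assoc, ← C_pow] at h
        cases i with
        | zero => simp at h
        | succ i =>
          rw [coeff_X_mul, coeff_C_mul] at h
          have := ih (right_ne_zero_of_mul h)
          rw [this, hlp.card]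
          ring
      · exact ih h1
    · rw [addOp_of_not n _ _ hp] at h
      exact ih h

open Polynomial in
/-- The polynomial `∏_{k < n} (1 - q ^ (2 k) y X)`. -/
def ePol (n : ℕ) (q y : A) : A[X] := gFac n (C q) (X * C y) 0

open Polynomial in
/-- Adding strips and removing strips commute up to the scalar `∏_{k < n} (1 - q ^ (2 k) x y)`, here in
the form of the coefficient of `x ^ l` in a matrix entry. -/
theorem strip_comm (hn : 1 ≤ n) (la nu : YoungDiagram) (l : ℕ) :
    ∑ ij ∈ Finset.HasAntidiagonal.antidiagonal l, (ePol n q y).coeff ij.1 *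
        ∑ mu ∈ lev (la.card + n * ij.2), stripW n q 1 la mu * stripW n q y nu mu =
      ∑ ka ∈ subs la, stripW n q y ka la *
        (if nu.card = ka.card + n * l then stripW n q 1 ka nu else 0) := by
  obtain ⟨W, hW⟩ : ∃ W : ℕ, W = la.card + n * l + nu.card + n := ⟨_, rfl⟩
  have key := congrArg (fun T => ((T (Finsupp.single la 1)) nu).coeff l)
    (window_exchange (C q) X hn (C y) (2 * W) (-(W : ℤ)))
  simp only [Module.End.mul_apply] at key
  have eW : -(W : ℤ) + (2 * W : ℕ) = W := by push_cast; ring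
  rw [eW] at key
  -- Entries of the two window operators.
  have hup : ∀ ka mu : YoungDiagram, mu.card ≤ W →
      upOp n (C q) X (-(W : ℤ)) (2 * W) (Finsupp.single ka 1) mu = stripW n (C q) X ka mu := by
    intro ka mu h
    rw [addOp_entry _ _ hn _ (by omega), stripWFrom_low _ _ hn (by omega)]
  have hupc : ∀ ka mu : YoungDiagram, mu.card ≤ W → ∀ i, (stripW n (C q) X ka mu).coeff i =
      if mu.card = ka.card + n * i then stripW n q 1 ka mu else 0 := by
    intro ka mu h i
    split_ifs with hc
    · rw [stripW_of_card _ _ hn hc, ← C_1, ← map_stripW q 1 C, mul_comm, coeff_C_mul_X_pow,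
        if_pos rfl]
    · by_contra hne
      rw [← hup ka mu h] at hne
      exact hc (upOp_coeff q _ hne)
  have hdown : ∀ ka mu : YoungDiagram, mu.card ≤ W →
      downOp n (C q) (C y) (-(W : ℤ)) (2 * W) (Finsupp.single mu 1) ka =
        C (stripW n q y ka mu) := by
    intro ka mu h
    rw [remOp_entry _ _ hn _ (by omega), stripWFrom_low _ _ hn (by omega), map_stripW]
  set v := upOp n (C q) X (-(W : ℤ)) (2 * W) (Finsupp.single la 1) with hv
  set w := downOp n (C q) (C y) (-(W : ℤ)) (2 * W) (Finsupp.single la 1) with hw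
  rw [← Module.End.mul_apply, end_apply, ← Module.End.mul_apply, end_apply] at key
  simp only [Module.End.mul_apply, diagOp_single, one_mul, finsetSum_coeff] at key
  have hsc : ∀ (T : Module.End A[X] (YoungDiagram →₀ A[X])) (la mu : YoungDiagram) (c : A[X]),
      T (Finsupp.single la c) mu = c * T (Finsupp.single la 1) mu := by
    intro T la mu c
    rw [show Finsupp.single la c = c • Finsupp.single la (1 : A[X]) by simp, map_smul]
    rfl
  have hleft : ∀ i j : ℕ, i + j = l →
      ∑ mu ∈ v.support, (v mu).coeff j * (gFac n (C q) (X * C y) (beadCount n W mu) *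
        downOp n (C q) (C y) (-(W : ℤ)) (2 * W) (Finsupp.single mu 1) nu).coeff i =
      (ePol n q y).coeff i *
        ∑ mu ∈ lev (la.card + n * j), stripW n q 1 la mu * stripW n q y nu mu := by
    intro i j hij
    have hjl : n * j ≤ n * l := Nat.mul_le_mul_left _ (by omega)
    have hvc : ∀ mu ∈ lev (la.card + n * j), (v mu).coeff j = stripW n q 1 la mu := by
      intro mu hmu
      rw [mem_lev] at hmu
      rw [hv, hup la mu (by omega), hupc la mu (by omega), if_pos hmu]
    rw [Finset.mul_sum]
    apply Finset.sum_congr_of_eq_on_inter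
    · intro mu _ hmu
      rw [mem_lev] at hmu
      have : (v mu).coeff j = 0 := by
        by_contra hne
        exact hmu (upOp_coeff q _ hne)
      rw [this, zero_mul]
    · intro mu hmu hns
      rw [← hvc mu hmu, Finsupp.notMem_support_iff.1 hns]
      simp
    · intro mu _ hmu
      rw [hvc mu hmu]
      rw [mem_lev] at hmu
      have hb : beadCount n W mu = 0 := by
        unfold beadCount
        rw [profile_eq_zero (la := mu) (d := W) (by omega),
          profile_eq_zero (la := mu) (d := W + n) (by omega)]
        simp
      rw [hdown nu mu (by omega), coeff_mul_C, hb, ePol]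
      ring
  have hL : ∑ mu ∈ v.support, (v mu * downOp n (C q) (C y) (-(W : ℤ)) (2 * W) (Finsupp.single mu
      (gFac n (C q) (X * C y) (beadCount n W mu))) nu).coeff l =
      ∑ ij ∈ Finset.HasAntidiagonal.antidiagonal l, (ePol n q y).coeff ij.1 *
        ∑ mu ∈ lev (la.card + n * ij.2), stripW n q 1 la mu * stripW n q y nu mu := by
    rw [← Finset.sum_congr rfl (fun ij hij => hleft ij.1 ij.2 (Finset.HasAntidiagonal.mem_antidiagonal.1 hij)),
      Finset.sum_comm]
    refine Finset.sum_congr rfl fun mu _ => ?_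
    rw [hsc _ mu nu, mul_comm, coeff_mul]
    exact Finset.sum_congr rfl fun ij _ => mul_comm _ _
  rw [← hL, key]
  have hwc : ∀ ka, w ka = C (stripW n q y ka la) := fun ka => hdown ka la (by omega)
  have hws : w.support ⊆ subs la := by
    intro ka hka
    rw [Finsupp.mem_support_iff, hwc] at hka
    rw [mem_subs]
    exact (card_of_stripW_ne (fun h => hka (by rw [h, C_0]))).1
  rw [Finset.sum_subset hws (fun ka _ hka => by
    rw [Finsupp.notMem_support_iff.1 hka, zero_mul, coeff_zero])]
  refine Finset.sum_congr rfl fun ka hka => ?_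
  rw [mem_subs] at hka
  have hcard : ka.card ≤ la.card := Finset.card_le_card hka
  have hb : beadCount n (-(W : ℤ)) ka = n := by
    unfold beadCount
    rw [profile_eq_neg (la := ka) (d := -(W : ℤ)) (by omega),
      profile_eq_neg (la := ka) (d := -(W : ℤ) + n) (by omega)]
    omega
  rw [hwc, coeff_C_mul, hsc, hup ka nu (by omega), hb, gFac, Finset.Ico_self, Finset.prod_empty,
    one_mul, hupc ka nu (by omega)]

end

end

noncomputable section

/-! ### The Cauchy kernel of ribbon functions -/

section

variable {A : Type*} [CommRing A] (n : ℕ) (q : A)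

/-- Remove a horizontal `n`-ribbon strip, with weight `q ^ spin * y ^ (number of ribbons)`. -/
def dOp (y : A) : Module.End A (YoungDiagram →₀ A) :=
  Finsupp.linearCombination A
    (fun la => ∑ ka ∈ subs la, Finsupp.single ka (stripW n q y ka la))

/-- Add a horizontal `n`-ribbon strip with `l` ribbons, with weight `q ^ spin`. -/
def uOp (l : ℕ) : Module.End A (YoungDiagram →₀ A) :=
  Finsupp.linearCombination A
    (fun ka => ∑ mu ∈ lev (ka.card + n * l), Finsupp.single mu (stripW n q 1 ka mu))

theorem dOp_single (y : A) (la : YoungDiagram) : dOp n q y (Finsupp.single la 1) =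
    ∑ ka ∈ subs la, Finsupp.single ka (stripW n q y ka la) := by
  rw [dOp, Finsupp.linearCombination_single, one_smul]

theorem uOp_single (l : ℕ) (ka : YoungDiagram) : uOp n q l (Finsupp.single ka 1) =
    ∑ mu ∈ lev (ka.card + n * l), Finsupp.single mu (stripW n q 1 ka mu) := by
  rw [uOp, Finsupp.linearCombination_single, one_smul]

theorem end_single (T : Module.End A (YoungDiagram →₀ A)) (la mu : YoungDiagram) (c : A) :
    T (Finsupp.single la c) mu = c * T (Finsupp.single la 1) mu := by
  rw [show Finsupp.single la c = c • Finsupp.single la (1 : A) by simp, map_smul]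
  rfl

theorem end_dOp (T : Module.End A (YoungDiagram →₀ A)) (y : A) (la nu : YoungDiagram) :
    T (dOp n q y (Finsupp.single la 1)) nu =
      ∑ ka ∈ subs la, stripW n q y ka la * T (Finsupp.single ka 1) nu := by
  rw [dOp_single, map_sum, Finsupp.finsetSum_apply]
  exact Finset.sum_congr rfl fun ka _ => end_single T ka nu _

theorem end_uOp (T : Module.End A (YoungDiagram →₀ A)) (l : ℕ) (ka nu : YoungDiagram) :
    T (uOp n q l (Finsupp.single ka 1)) nu =
      ∑ mu ∈ lev (ka.card + n * l), stripW n q 1 ka mu * T (Finsupp.single mu 1) nu := by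
  rw [uOp_single, map_sum, Finsupp.finsetSum_apply]
  exact Finset.sum_congr rfl fun mu _ => end_single T mu nu _

theorem dOp_entry (y : A) (la ka : YoungDiagram) :
    dOp n q y (Finsupp.single la 1) ka = stripW n q y ka la := by
  have := end_dOp n q 1 y la ka
  rw [Module.End.one_apply] at this
  rw [this]
  simp only [Module.End.one_apply, Finsupp.single_apply, mul_ite, mul_one, mul_zero]
  rw [Finset.sum_ite_eq']
  split_ifs with h
  · rfl
  · rw [mem_subs] at h
    unfold stripW
    rw [if_neg h]

theorem uOp_entry (l : ℕ) (ka mu : YoungDiagram) : uOp n q l (Finsupp.single ka 1) mu =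
    if mu.card = ka.card + n * l then stripW n q 1 ka mu else 0 := by
  have := end_uOp n q 1 l ka mu
  rw [Module.End.one_apply] at this
  rw [this]
  simp only [Module.End.one_apply, Finsupp.single_apply, mul_ite, mul_one, mul_zero]
  rw [Finset.sum_ite_eq']
  simp only [mem_lev]

/-- The generating series of the operators `uOp`. -/
def uSer : PowerSeries (Module.End A (YoungDiagram →₀ A)) := PowerSeries.mk (uOp n q)

/-- The series `∏_{y ∈ ys} ∏_{k < n} (1 - q ^ (2 k) y X)`. -/
def eSer (ys : List A) : PowerSeries A :=
  (ys.map fun y => ((ePol n q y : Polynomial A) : PowerSeries A)).prod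

/-- Successive removal of horizontal ribbon strips, the last one with the first letter. -/
def pOp (ys : List A) : Module.End A (YoungDiagram →₀ A) := (ys.map (dOp n q)).prod

/-- Scalar power series as operator-valued power series. -/
def scal (E : PowerSeries A) : PowerSeries (Module.End A (YoungDiagram →₀ A)) :=
  PowerSeries.map (algebraMap A (Module.End A (YoungDiagram →₀ A))) E

variable {n}

theorem coeff_scal_mul (E : PowerSeries A) (P : Module.End A (YoungDiagram →₀ A)) (l : ℕ) :
    PowerSeries.coeff l (scal E * PowerSeries.C P * uSer n q) =
      ∑ ij ∈ Finset.HasAntidiagonal.antidiagonal l,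
        PowerSeries.coeff ij.1 E • (P * uOp n q ij.2) := by
  rw [PowerSeries.coeff_mul]
  refine Finset.sum_congr rfl fun ij _ => ?_
  rw [PowerSeries.coeff_mul_C, scal, PowerSeries.coeff_map, uSer, PowerSeries.coeff_mk,
    Algebra.algebraMap_eq_smul_one]
  simp only [smul_mul_assoc, one_mul]

/-- The relation `strip_comm` in terms of operator-valued power series. -/
theorem scal_dOp_uSer (hn : 1 ≤ n) (y : A) :
    scal ((ePol n q y : Polynomial A) : PowerSeries A) * PowerSeries.C (dOp n q y) * uSer n q =
      uSer n q * PowerSeries.C (dOp n q y) := by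
  ext l : 1
  rw [coeff_scal_mul, PowerSeries.coeff_mul_C, uSer, PowerSeries.coeff_mk]
  apply Finsupp.lhom_ext'
  intro la
  apply LinearMap.ext_ring
  ext nu
  have h := strip_comm q y hn la nu l
  simp only [LinearMap.coe_comp, Function.comp_apply, Finsupp.lsingle_apply]
  rw [Module.End.mul_apply, end_dOp]
  simp only [uOp_entry]
  rw [← h, LinearMap.sum_apply, Finsupp.finsetSum_apply]
  refine Finset.sum_congr rfl fun ij _ => ?_
  rw [LinearMap.smul_apply, Finsupp.smul_apply, Module.End.mul_apply, end_uOp,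
    Polynomial.coeff_coe, smul_eq_mul]
  simp only [dOp_entry]

theorem scal_comm (E : PowerSeries A) (P : Module.End A (YoungDiagram →₀ A)) :
    scal E * PowerSeries.C P = PowerSeries.C P * scal E := by
  ext l : 1
  rw [PowerSeries.coeff_mul_C, PowerSeries.coeff_C_mul, scal, PowerSeries.coeff_map]
  exact Algebra.commutes _ _

theorem scal_pOp_uSer (hn : 1 ≤ n) (ys : List A) :
    scal (eSer n q ys) * PowerSeries.C (pOp n q ys) * uSer n q =
      uSer n q * PowerSeries.C (pOp n q ys) := by
  induction ys with
  | nil => simp [eSer, pOp, scal]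
  | cons y ys ih =>
    have e1 : eSer n q (y :: ys) = ((ePol n q y : Polynomial A) : PowerSeries A) * eSer n q ys := by
      simp [eSer]
    have e2 : pOp n q (y :: ys) = dOp n q y * pOp n q ys := by simp [pOp]
    have e3 : scal (eSer n q (y :: ys)) =
        scal ((ePol n q y : Polynomial A) : PowerSeries A) * scal (eSer n q ys) := by
      rw [e1, scal, map_mul]; rfl
    rw [e2, e3, map_mul]
    calc _ = scal ((ePol n q y : Polynomial A) : PowerSeries A) *
          (scal (eSer n q ys) * PowerSeries.C (dOp n q y)) * PowerSeries.C (pOp n q ys) *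
            uSer n q := by simp only [mul_assoc]
      _ = scal ((ePol n q y : Polynomial A) : PowerSeries A) * PowerSeries.C (dOp n q y) *
          (scal (eSer n q ys) * PowerSeries.C (pOp n q ys) * uSer n q) := by
        rw [scal_comm]; simp only [mul_assoc]
      _ = _ := by
        rw [ih, ← mul_assoc, scal_dOp_uSer q hn, mul_assoc]

variable (n) in
/-- The ribbon function of `la / mu` evaluated at the letters `ys`. -/
def Gv (ys : List A) (la mu : YoungDiagram) : A := pOp n q ys (Finsupp.single la 1) mu

/-- The chain condition behind a nonzero value of a ribbon function. -/
theorem reach_of_Gv_ne (hn : 1 ≤ n) (ys : List A) : ∀ {la mu : YoungDiagram},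
    Gv n q ys la mu ≠ 0 → Relation.ReflTransGen (RibbonStep n) la mu := by
  induction ys with
  | nil =>
    intro la mu h
    rw [Gv, pOp, List.map_nil, List.prod_nil, Module.End.one_apply, Finsupp.single_apply] at h
    split_ifs at h with he
    · subst he; exact .refl
    · exact absurd rfl h
  | cons y ys ih =>
    intro la mu h
    rw [Gv, pOp, List.map_cons, List.prod_cons, Module.End.mul_apply, end_apply] at h
    obtain ⟨rho, -, h⟩ := Finset.exists_ne_zero_of_sum_ne_zero h
    rw [dOp_entry] at h
    exact (ih (left_ne_zero_of_mul h)).trans (reach_of_stripW_ne hn (right_ne_zero_of_mul h))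

theorem card_of_reach {la mu : YoungDiagram} (h : Relation.ReflTransGen (RibbonStep n) la mu) :
    ∃ j, la.card = mu.card + n * j := by
  induction h with
  | refl => exact ⟨0, by simp⟩
  | tail h1 h2 ih =>
    rename_i b c
    obtain ⟨j, hj⟩ := ih
    have h3 := Finset.card_sdiff_add_card_eq_card (show c.cells ⊆ b.cells from h2.1)
    have h4 := h2.2.1
    have h5 : b.card = c.card + n := by
      change b.cells.card = c.cells.card + n
      omega
    exact ⟨j + 1, by rw [hj, h5]; ring⟩

theorem eq_of_reach_core {delta mu : YoungDiagram} (hd : ∀ mu, ¬ RibbonStep n delta mu)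
    (h : Relation.ReflTransGen (RibbonStep n) delta mu) : mu = delta := by
  rcases Relation.ReflTransGen.cases_head h with h | ⟨b, hb, -⟩
  · exact h.symm
  · exact absurd hb (hd b)

theorem Gv_core (hn : 1 ≤ n) {delta : YoungDiagram} (hd : ∀ mu, ¬ RibbonStep n delta mu)
    (ys : List A) : Gv n q ys delta delta = 1 := by
  have h1 : ∀ y : A, dOp n q y (Finsupp.single delta 1) = Finsupp.single delta 1 := by
    intro y
    ext ka
    rw [dOp_entry, Finsupp.single_apply]
    split_ifs with h
    · subst h; exact stripW_self q y hn delta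
    · by_contra hne
      exact h (eq_of_reach_core hd (reach_of_stripW_ne hn hne)).symm
  have h2 : pOp n q ys (Finsupp.single delta 1) = Finsupp.single delta 1 := by
    induction ys with
    | nil => simp [pOp]
    | cons y ys ih =>
      rw [pOp, List.map_cons, List.prod_cons, Module.End.mul_apply]
      rw [pOp] at ih
      rw [ih, h1]
  rw [Gv, h2, Finsupp.single_eq_same]

/-- Only the empty strip leads to a core. -/
theorem uOp_core (hn : 1 ≤ n) {delta : YoungDiagram} (hd : ∀ mu, ¬ RibbonStep n delta mu)
    (l : ℕ) (v : YoungDiagram →₀ A) : uOp n q l v delta = if l = 0 then v delta else 0 := by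
  induction v using Finsupp.induction_linear with
  | zero => simp
  | add u w hu hw =>
    simp only [map_add, Finsupp.add_apply, hu, hw]
    split_ifs <;> simp
  | single ka c =>
    rw [end_single, uOp_entry, Finsupp.single_apply]
    by_cases hk : ka = delta
    · subst hk
      rw [stripW_self q 1 hn]
      by_cases hl : l = 0
      · subst hl; simp
      · have : n * l ≠ 0 := Nat.mul_ne_zero (by omega) hl
        rw [if_neg (by omega), if_neg hl, mul_zero]
    · rw [if_neg hk, ite_self]
      split_ifs with hc
      · have : stripW n q 1 ka delta = 0 := by
          by_contra hne
          exact hk (eq_of_reach_core hd (reach_of_stripW_ne hn hne))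
        rw [this, mul_zero]
      · rw [mul_zero]

theorem constantCoeff_eSer (ys : List A) : PowerSeries.constantCoeff (eSer n q ys) = 1 := by
  unfold eSer
  rw [map_list_prod]
  apply List.prod_eq_one
  intro a ha
  simp only [List.map_map, List.mem_map, Function.comp_apply] at ha
  obtain ⟨y, -, rfl⟩ := ha
  rw [← PowerSeries.coeff_zero_eq_constantCoeff_apply, Polynomial.coeff_coe,
    Polynomial.coeff_zero_eq_eval_zero, ePol, gFac, Polynomial.eval_prod]
  simp

/-- The inverse of a power series with constant coefficient `1`. -/
def invSer (E : PowerSeries A) : PowerSeries A := PowerSeries.invOfUnit E 1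

/-- Adding a horizontal strip of `l` ribbons acts on ribbon functions over a core as multiplication
by the `l`-th coefficient of the inverse of `eSer`. -/
theorem sum_uOp_Gv (hn : 1 ≤ n) {delta : YoungDiagram} (hd : ∀ mu, ¬ RibbonStep n delta mu)
    (ys : List A) (ka : YoungDiagram) (l : ℕ) :
    ∑ mu ∈ lev (ka.card + n * l), stripW n q 1 ka mu * Gv n q ys mu delta =
      PowerSeries.coeff l (invSer (eSer n q ys)) * Gv n q ys ka delta := by
  have h1 : eSer n q ys * PowerSeries.mk (fun l => ∑ mu ∈ lev (ka.card + n * l),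
      stripW n q 1 ka mu * Gv n q ys mu delta) = PowerSeries.C (Gv n q ys ka delta) := by
    ext l
    have h2 := congrArg (fun T => (PowerSeries.coeff l T) (Finsupp.single ka 1) delta)
      (scal_pOp_uSer q hn ys)
    simp only [coeff_scal_mul, PowerSeries.coeff_mul_C] at h2
    rw [uSer, PowerSeries.coeff_mk, Module.End.mul_apply, uOp_core q hn hd, LinearMap.sum_apply,
      Finsupp.finsetSum_apply] at h2
    rw [PowerSeries.coeff_C, Gv, ← h2, PowerSeries.coeff_mul]
    refine Finset.sum_congr rfl fun ij _ => ?_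
    rw [LinearMap.smul_apply, Finsupp.smul_apply, Module.End.mul_apply, end_uOp,
      PowerSeries.coeff_mk, smul_eq_mul]
    rfl
  have h3 : eSer n q ys * invSer (eSer n q ys) = 1 :=
    PowerSeries.mul_invOfUnit _ _ (by rw [constantCoeff_eSer]; rfl)
  have h4 := congrArg (fun S => invSer (eSer n q ys) * S) h1
  simp only [← mul_assoc] at h4
  rw [mul_comm (invSer _), h3, one_mul] at h4
  have h5 := congrArg (PowerSeries.coeff l) h4
  rwa [PowerSeries.coeff_mk, PowerSeries.coeff_mul_C] at h5

variable (n) in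
/-- The Cauchy kernel `∑_μ G_μ(xs) G_μ(ys)` over the `μ` with `n`-core `delta` and `m` ribbons. -/
def kern (delta : YoungDiagram) (xs ys : List A) (m : ℕ) : A :=
  ∑ mu ∈ lev (delta.card + n * m), Gv n q xs mu delta * Gv n q ys mu delta

theorem kern_nil (hn : 1 ≤ n) {delta : YoungDiagram} (hd : ∀ mu, ¬ RibbonStep n delta mu)
    (ys : List A) (m : ℕ) : kern n q delta [] ys m = if m = 0 then 1 else 0 := by
  unfold kern
  have h1 : ∀ mu, Gv n q [] mu delta = if mu = delta then 1 else 0 := by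
    intro mu
    rw [Gv, pOp, List.map_nil, List.prod_nil, Module.End.one_apply, Finsupp.single_apply]
  simp only [h1, ite_mul, one_mul, zero_mul]
  rw [Finset.sum_ite_eq', Gv_core q hn hd]
  simp only [mem_lev]
  by_cases hm : m = 0
  · subst hm; simp
  · have : n * m ≠ 0 := Nat.mul_ne_zero (by omega) hm
    rw [if_neg (by omega), if_neg hm]

/-- Peeling off the outermost letter from the Cauchy kernel. -/
theorem kern_append (hn : 1 ≤ n) {delta : YoungDiagram} (hd : ∀ mu, ¬ RibbonStep n delta mu)
    (xs ys : List A) (x : A) (m : ℕ) : kern n q delta (xs ++ [x]) ys m =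
      ∑ lj ∈ Finset.HasAntidiagonal.antidiagonal m,
        x ^ lj.1 * PowerSeries.coeff lj.1 (invSer (eSer n q ys)) * kern n q delta xs ys lj.2 := by
  set f : YoungDiagram → YoungDiagram → A :=
    fun ka mu => stripW n q x ka mu * Gv n q xs ka delta * Gv n q ys mu delta with hf
  have hR : ∀ lj ∈ Finset.HasAntidiagonal.antidiagonal m,
      x ^ lj.1 * PowerSeries.coeff lj.1 (invSer (eSer n q ys)) * kern n q delta xs ys lj.2 =
      ∑ ka ∈ lev (delta.card + n * lj.2), ∑ mu ∈ lev (delta.card + n * m), f ka mu := by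
    intro lj hlj
    rw [Finset.HasAntidiagonal.mem_antidiagonal] at hlj
    unfold kern
    rw [Finset.mul_sum]
    refine Finset.sum_congr rfl fun ka hka => ?_
    rw [mem_lev] at hka
    have e : delta.card + n * m = ka.card + n * lj.1 := by rw [hka, ← hlj]; ring
    calc _ = x ^ lj.1 * Gv n q xs ka delta *
          (PowerSeries.coeff lj.1 (invSer (eSer n q ys)) * Gv n q ys ka delta) := by ring
      _ = _ := by
        rw [← sum_uOp_Gv q hn hd, Finset.mul_sum, e]
        refine Finset.sum_congr rfl fun mu hmu => ?_
        rw [mem_lev] at hmu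
        simp only [hf]
        rw [stripW_of_card q x hn hmu]
        ring
  rw [Finset.sum_congr rfl hR]
  have hL : kern n q delta (xs ++ [x]) ys m =
      ∑ mu ∈ lev (delta.card + n * m), ∑ ka ∈ subs mu, f ka mu := by
    unfold kern
    refine Finset.sum_congr rfl fun mu _ => ?_
    rw [Gv, pOp, List.map_append, List.prod_append, List.map_singleton, List.prod_singleton,
      Module.End.mul_apply, end_dOp, Finset.sum_mul]
    rfl
  rw [hL]
  have hswap : ∀ lj : ℕ × ℕ, ∑ ka ∈ lev (delta.card + n * lj.2),
      ∑ mu ∈ lev (delta.card + n * m), f ka mu =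
      ∑ mu ∈ lev (delta.card + n * m), ∑ ka ∈ lev (delta.card + n * lj.2), f ka mu :=
    fun lj => Finset.sum_comm
  simp only [hswap]
  rw [Finset.sum_comm]
  refine Finset.sum_congr rfl fun mu hmu => ?_
  rw [mem_lev] at hmu
  rw [← Finset.sum_biUnion]
  · apply Finset.sum_congr_of_eq_on_inter
    · intro ka _ hka
      by_contra hne
      apply hka
      have h1 : stripW n q x ka mu ≠ 0 := fun h => hne (by simp only [hf, h, zero_mul])
      have h2 : Gv n q xs ka delta ≠ 0 := fun h => hne (by simp only [hf, h, zero_mul, mul_zero])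
      obtain ⟨l, hl⟩ := (card_of_stripW_ne h1).2
      obtain ⟨j, hj⟩ := card_of_reach (reach_of_Gv_ne q hn xs h2)
      have e : n * (l + j) = n * m := by rw [Nat.mul_add]; omega
      rw [Finset.mem_biUnion]
      exact ⟨(l, j), Finset.HasAntidiagonal.mem_antidiagonal.2 (Nat.eq_of_mul_eq_mul_left hn e),
        mem_lev.2 hj⟩
    · intro ka _ hka
      rw [mem_subs] at hka
      simp only [hf, stripW, if_neg hka, zero_mul]
    · intro ka _ _; rfl
  · intro a ha b hb hab
    rw [Function.onFun, Finset.disjoint_left]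
    intro ka h1 h2
    rw [mem_lev] at h1 h2
    rw [Finset.mem_coe, Finset.HasAntidiagonal.mem_antidiagonal] at ha hb
    apply hab
    have : a.2 = b.2 := Nat.eq_of_mul_eq_mul_left hn (by omega)
    exact Prod.ext (by omega) this

/-- The Cauchy kernel depends only on the series `eSer n q ys`. -/
theorem kern_eq {n' : ℕ} (hn : 1 ≤ n) (hn' : 1 ≤ n') {delta delta' : YoungDiagram}
    (hd : ∀ mu, ¬ RibbonStep n delta mu) (hd' : ∀ mu, ¬ RibbonStep n' delta' mu)
    (xs ys zs : List A) (h : eSer n q ys = eSer n' q zs) (m : ℕ) :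
    kern n q delta xs ys m = kern n' q delta' xs zs m := by
  induction xs using List.reverseRecOn generalizing m with
  | nil => rw [kern_nil q hn hd, kern_nil q hn' hd']
  | append_singleton xs x ih =>
    rw [kern_append q hn hd, kern_append q hn' hd', h]
    simp only [ih]

end

theorem bot_core (mu : YoungDiagram) : ¬ RibbonStep 1 ⊥ mu := by
  intro h
  have := h.2.1
  simp at this

end

noncomputable section

/-! ### Ribbon functions as matrix entries of strip operators -/

/-- Prepend a horizontal strip to a ribbon tableau. -/
def consTab {n N : ℕ} {lam mu ka : YoungDiagram} (hle : mu ≤ ka) {T : Finset (Finset Cell)}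
    (hT : T ∈ stripTilings n mu ka) (R : RibbonTableau n N lam ka) :
    RibbonTableau n (N + 1) lam mu where
  chain := Fin.cons mu R.chain
  chain_zero := rfl
  chain_last := by
    rw [← Fin.succ_last, Fin.cons_succ]
    exact R.chain_last
  chain_mono := by
    intro i
    refine Fin.cases ?_ (fun i => ?_) i
    · rw [Fin.cons_succ, R.chain_zero]; exact hle
    · rw [Fin.cons_succ, ← Fin.succ_castSucc, Fin.cons_succ]
      exact R.chain_mono i
  tiling := Fin.cons T R.tiling
  tiling_strip := by
    intro i
    refine Fin.cases ?_ (fun i => ?_) i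
    · rw [Fin.cons_succ, R.chain_zero]; exact mem_stripTilings.1 hT
    · rw [Fin.cons_succ, ← Fin.succ_castSucc, Fin.cons_succ, Fin.cons_succ]
      exact R.tiling_strip i

/-- Drop the first horizontal strip of a ribbon tableau. -/
def tailTab {n N : ℕ} {lam mu : YoungDiagram} (R : RibbonTableau n (N + 1) lam mu) :
    RibbonTableau n N lam (R.chain (Fin.succ 0)) where
  chain := fun i => R.chain i.succ
  chain_zero := rfl
  chain_last := by rw [Fin.succ_last]; exact R.chain_last
  chain_mono := fun i => R.chain_mono i.succ
  tiling := fun i => R.tiling i.succ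
  tiling_strip := fun i => R.tiling_strip i.succ

theorem RibbonTableau.ext' {n N : ℕ} {lam mu : YoungDiagram} {R S : RibbonTableau n N lam mu}
    (h1 : R.chain = S.chain) (h2 : R.tiling = S.tiling) : R = S := by
  cases R; cases S
  simp only at h1 h2
  subst h1 h2
  rfl

theorem RibbonTableau.mono {n N : ℕ} {lam mu : YoungDiagram} (R : RibbonTableau n N lam mu) :
    Monotone R.chain := Fin.monotone_iff_le_succ.2 R.chain_mono

theorem RibbonTableau.le_lam {n N : ℕ} {lam mu : YoungDiagram} (R : RibbonTableau n N lam mu)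
    (i : Fin (N + 1)) : R.chain i ≤ lam := by
  conv_rhs => rw [← R.chain_last]
  exact R.mono (Fin.le_last i)

/-- A ribbon tableau with at least one letter is an innermost horizontal strip followed by a
ribbon tableau in the remaining letters. -/
def tabEquiv (n N : ℕ) (lam mu : YoungDiagram) : RibbonTableau n (N + 1) lam mu ≃
    Σ ka : {ka // ka ∈ (subs lam).filter (fun ka => mu ≤ ka)},
      {T // T ∈ stripTilings n mu ka.1} × RibbonTableau n N lam ka.1 where
  toFun R := ⟨⟨R.chain (Fin.succ 0), Finset.mem_filter.2 ⟨mem_subs.2 (R.le_lam _), by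
      have := R.chain_mono 0
      rwa [Fin.castSucc_zero, R.chain_zero] at this⟩⟩,
    ⟨R.tiling 0, by
      have := R.tiling_strip 0
      rw [Fin.castSucc_zero, R.chain_zero] at this
      exact mem_stripTilings.2 this⟩, tailTab R⟩
  invFun p := consTab (Finset.mem_filter.1 p.1.2).2 p.2.1.2 p.2.2
  left_inv R := by
    apply RibbonTableau.ext'
    · change Fin.cons mu (Fin.tail R.chain) = R.chain
      exact (congrArg (fun a => (Fin.cons a (Fin.tail R.chain) : Fin (N + 1 + 1) → YoungDiagram))
        R.chain_zero.symm).trans (Fin.cons_self_tail _)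
    · exact Fin.cons_self_tail _
  right_inv p := by
    obtain ⟨⟨ka, hka⟩, ⟨T, hT⟩, R⟩ := p
    obtain ⟨chain, h0, h1, h2, til, h3⟩ := R
    dsimp only at h0
    subst h0
    rfl

instance finite_tab (n N : ℕ) (lam mu : YoungDiagram) : Finite (RibbonTableau n N lam mu) := by
  induction N generalizing mu with
  | zero =>
    have : Subsingleton (RibbonTableau n 0 lam mu) := by
      refine ⟨fun R S => RibbonTableau.ext' ?_ (Subsingleton.elim _ _)⟩
      funext i
      rw [show i = 0 from Fin.fin_one_eq_zero i, R.chain_zero, S.chain_zero]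
    infer_instance
  | succ N ih => exact Finite.of_equiv _ (tabEquiv n N lam mu).symm

section

variable {A : Type*} [CommRing A] {n : ℕ} (q : A)

/-- The term `q ^ spin * ys ^ weight` of a ribbon tableau. -/
def tabW {N : ℕ} (ys : Fin N → A) {lam mu : YoungDiagram} (T : RibbonTableau n N lam mu) : A :=
  q ^ T.spin * ∏ i, ys i ^ (T.tiling i).card

theorem le_of_reach {la mu : YoungDiagram} (h : Relation.ReflTransGen (RibbonStep n) la mu) :
    mu ≤ la := by
  induction h with
  | refl => exact le_rfl
  | tail _ h2 ih => exact h2.1.trans ih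

theorem Gv_cons (hn : 1 ≤ n) (y : A) (ys : List A) (la mu : YoungDiagram) :
    Gv n q (y :: ys) la mu = ∑ ka ∈ subs la, Gv n q ys la ka * stripW n q y mu ka := by
  rw [Gv, pOp, List.map_cons, List.prod_cons, Module.End.mul_apply, end_apply]
  simp only [dOp_entry]
  refine Finset.sum_subset ?_ ?_
  · intro ka hka
    rw [mem_subs]
    exact le_of_reach (reach_of_Gv_ne q hn ys (Finsupp.mem_support_iff.1 hka))
  · intro ka _ hka
    rw [Finsupp.notMem_support_iff] at hka
    rw [hka, zero_mul]

theorem Gv_nil (la mu : YoungDiagram) : Gv n q [] la mu = if la = mu then 1 else 0 := by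
  rw [Gv, pOp, List.map_nil, List.prod_nil, Module.End.one_apply, Finsupp.single_apply]

/-- The sum over ribbon tableaux is computed one letter at a time, by the operators `dOp`. -/
theorem finsum_tabW (hn : 1 ≤ n) (lam : YoungDiagram) {N : ℕ} : ∀ (ys : Fin N → A)
    (mu : YoungDiagram), ∑ᶠ T : RibbonTableau n N lam mu, tabW q ys T =
      Gv n q (List.ofFn ys) lam mu := by
  induction N with
  | zero =>
    intro ys mu
    rw [List.ofFn_zero, Gv_nil]
    split_ifs with h
    · subst h
      have hT : ∀ T : RibbonTableau n 0 lam lam, T = ⟨fun _ => lam, rfl, rfl, fun i => i.elim0,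
          fun i => i.elim0, fun i => i.elim0⟩ := by
        intro T
        refine RibbonTableau.ext' ?_ (Subsingleton.elim _ _)
        funext i
        rw [show i = 0 from Fin.fin_one_eq_zero i, T.chain_zero]
      rw [finsum_eq_single _ _ (fun T hne => absurd (hT T) hne)]
      simp [tabW, RibbonTableau.spin]
    · have : IsEmpty (RibbonTableau n 0 lam mu) :=
        ⟨fun T => h (T.chain_last.symm.trans T.chain_zero)⟩
      exact finsum_of_isEmpty _
  | succ N ih =>
    intro ys mu
    rw [List.ofFn_succ, Gv_cons q hn]
    have hF : ∀ N mu, Fintype (RibbonTableau n N lam mu) := fun N mu => Fintype.ofFinite _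
    rw [finsum_eq_sum_of_fintype, Fintype.sum_equiv (tabEquiv n N lam mu) _
      (fun p => (q ^ tilingSpin p.2.1.1 * ys 0 ^ p.2.1.1.card) *
        tabW q (fun i => ys i.succ) p.2.2)]
    · rw [Fintype.sum_sigma]
      simp only [Fintype.sum_prod_type, ← Finset.mul_sum]
      simp only [← finsum_eq_sum_of_fintype, ih]
      simp only [finsum_eq_sum_of_fintype]
      simp only [← Finset.sum_mul]
      rw [Finset.sum_coe_sort ((subs lam).filter (fun ka => mu ≤ ka)) (fun ka =>
        (∑ T : {T // T ∈ stripTilings n mu ka}, q ^ tilingSpin T.1 * ys 0 ^ T.1.card) *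
          Gv n q (List.ofFn fun i => ys i.succ) lam ka), Finset.sum_filter]
      refine Finset.sum_congr rfl fun ka _ => ?_
      unfold stripW
      split_ifs with h
      · rw [mul_comm, Finset.sum_coe_sort (stripTilings n mu ka)
          (fun T => q ^ tilingSpin T * ys 0 ^ T.card)]
      · rw [mul_zero]
    · intro T
      unfold tabW RibbonTableau.spin
      rw [Fin.sum_univ_succ, Fin.prod_univ_succ, pow_add]
      change _ = (q ^ tilingSpin (T.tiling 0) * ys 0 ^ (T.tiling 0).card) *
        (q ^ (∑ i : Fin N, tilingSpin (T.tiling i.succ)) *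
          ∏ i : Fin N, ys i.succ ^ (T.tiling i.succ).card)
      ring

/-- Evaluating a ribbon function at letters `ys` gives the corresponding matrix entry. -/
theorem eval_ribbonFn (hn : 1 ≤ n) {N : ℕ} (f : Polynomial ℤ →+* A) (ys : Fin N → A)
    (lam mu : YoungDiagram) : MvPolynomial.eval₂ f ys (ribbonFn n N lam mu) =
      Gv n (f Polynomial.X) (List.ofFn ys) lam mu := by
  have hF : Fintype (RibbonTableau n N lam mu) := Fintype.ofFinite _
  rw [← finsum_tabW _ hn, ribbonFn, finsum_eq_sum_of_fintype, finsum_eq_sum_of_fintype,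
    MvPolynomial.eval₂_sum]
  refine Finset.sum_congr rfl fun T _ => ?_
  simp [tableauTerm, tabW, MvPolynomial.eval₂_prod, MvPolynomial.eval₂_pow]

end

end

noncomputable section

/-! ### Linear independence of Schur polynomials -/

/-- The first `k` rows of a partition. -/
def firstRows (k : ℕ) (nu : YoungDiagram) : YoungDiagram where
  cells := nu.cells.filter (fun c => c.1 < k)
  isLowerSet := by
    intro a b hab ha
    simp only [Finset.coe_filter, Set.mem_ofPred_eq] at ha ⊢
    exact ⟨nu.isLowerSet hab ha.1, lt_of_le_of_lt hab.1 ha.2⟩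

theorem mem_firstRows {k : ℕ} {nu : YoungDiagram} {c : Cell} :
    c ∈ (firstRows k nu).cells ↔ c ∈ nu.cells ∧ c.1 < k := by
  simp [firstRows]

theorem firstRows_zero (nu : YoungDiagram) : firstRows 0 nu = ⊥ := by
  ext c
  rw [mem_firstRows]
  simp

theorem firstRows_card_succ (k : ℕ) (nu : YoungDiagram) :
    (firstRows (k + 1) nu).card = (firstRows k nu).card + nu.rowLen k := by
  rw [YoungDiagram.rowLen_eq_card]
  change (firstRows (k + 1) nu).cells.card = (firstRows k nu).cells.card + (nu.row k).card
  rw [← Finset.card_union_of_disjoint]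
  · congr 1
    ext c
    simp only [Finset.mem_union, mem_firstRows, YoungDiagram.row, Finset.mem_filter]
    constructor
    · rintro ⟨h1, h2⟩
      rcases Nat.lt_succ_iff_lt_or_eq.1 h2 with h | h
      · exact Or.inl ⟨h1, h⟩
      · exact Or.inr ⟨h1, h⟩
    · rintro (⟨h1, h2⟩ | ⟨h1, h2⟩) <;> exact ⟨h1, by omega⟩
  · rw [Finset.disjoint_left]
    intro c h1 h2
    rw [mem_firstRows] at h1
    rw [YoungDiagram.row, Finset.mem_filter] at h2
    omega

theorem firstRows_of_card_le {k : ℕ} {nu : YoungDiagram} (h : nu.card ≤ k) :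
    firstRows k nu = nu := by
  ext c
  rw [mem_firstRows]
  refine ⟨fun h => h.1, fun hc => ⟨hc, ?_⟩⟩
  have := lt_card_of_mem (la := nu) (i := c.1) (j := c.2) hc
  omega

/-- A partition of size at most `N` is determined by the partial sums of its first `N` rows. -/
theorem eq_of_firstRows_card {N : ℕ} {la nu : YoungDiagram} (hla : la.card ≤ N)
    (hnu : nu.card ≤ N)
    (h : ∀ k ≤ N, (firstRows k la).card = (firstRows k nu).card) : la = nu := by
  have hr : ∀ i, la.rowLen i = nu.rowLen i := by
    intro i
    rcases lt_or_ge i N with hi | hi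
    · have h1 := h (i + 1) hi
      rw [firstRows_card_succ, firstRows_card_succ, h i hi.le] at h1
      omega
    · have hz : ∀ mu : YoungDiagram, mu.card ≤ N → mu.rowLen i = 0 := by
        intro mu hmu
        by_contra hne
        have := lt_card_of_mem _ (YoungDiagram.mem_iff_lt_rowLen.2 (Nat.pos_of_ne_zero hne))
        omega
      rw [hz la hla, hz nu hnu]
  ext ⟨i, j⟩
  rw [YoungDiagram.mem_cells, YoungDiagram.mem_cells, YoungDiagram.mem_iff_lt_rowLen,
    YoungDiagram.mem_iff_lt_rowLen, hr]

theorem isRibbon_singleton (c : Cell) : IsRibbon 1 {c} := by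
  obtain ⟨i, j⟩ := c
  refine ⟨by simp, ?_, ?_, ?_⟩
  · intro a ha b hb
    rw [Finset.mem_singleton] at ha hb
    subst ha hb
    exact .refl
  · rintro ⟨a, b, h1, h2, -⟩
    simp only [Finset.mem_singleton, Prod.mk.injEq] at h1 h2
    omega
  · refine ⟨⟨Finset.range (i + 1) ×ˢ Finset.range (j + 1), ?_⟩,
      ⟨(Finset.range (i + 1) ×ˢ Finset.range (j + 1)).erase (i, j), ?_⟩, ?_, ?_⟩
    · rintro ⟨a, b⟩ ⟨a', b'⟩ hab ha
      have h1 : a' ≤ a := hab.1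
      have h2 : b' ≤ b := hab.2
      simp only [Finset.coe_product, Set.mem_prod, Finset.mem_coe, Finset.mem_range] at ha ⊢
      omega
    · rintro ⟨a, b⟩ ⟨a', b'⟩ hab ha
      have h1 : a' ≤ a := hab.1
      have h2 : b' ≤ b := hab.2
      simp only [Finset.mem_coe, Finset.mem_erase, Finset.mem_product, Finset.mem_range, ne_eq,
        Prod.mk.injEq] at ha ⊢
      omega
    · intro c hc
      exact Finset.mem_of_mem_erase hc
    · ext ⟨a, b⟩
      simp only [Finset.mem_sdiff, Finset.mem_erase, Finset.mem_product, Finset.mem_range, ne_eq,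
        Prod.mk.injEq, Finset.mem_singleton]
      omega

/-- The only tiling by `1`-ribbons is the tiling by single squares. -/
theorem tiling_one {S : Finset Cell} {T : Finset (Finset Cell)} (h : IsTilingOf 1 S T) :
    T = S.image (fun c => {c}) := by
  ext R
  rw [Finset.mem_image]
  constructor
  · intro hR
    obtain ⟨c, rfl⟩ := Finset.card_eq_one.1 (h.1 R hR).1
    exact ⟨c, tile_subset h hR (Finset.mem_singleton_self c), rfl⟩
  · rintro ⟨c, hc, rfl⟩
    obtain ⟨R, hR, hcR⟩ := exists_tile h hc
    obtain ⟨d, rfl⟩ := Finset.card_eq_one.1 (h.1 R hR).1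
    rw [Finset.mem_singleton] at hcR
    subst hcR
    exact hR

theorem isTilingOf_one (S : Finset Cell) : IsTilingOf 1 S (S.image (fun c => {c})) := by
  refine ⟨?_, ?_, ?_⟩
  · intro R hR
    obtain ⟨c, -, rfl⟩ := Finset.mem_image.1 hR
    exact isRibbon_singleton c
  · intro P hP Q hQ hne
    obtain ⟨c, -, rfl⟩ := Finset.mem_image.1 (Finset.mem_coe.1 hP)
    obtain ⟨d, -, rfl⟩ := Finset.mem_image.1 (Finset.mem_coe.1 hQ)
    rw [Finset.disjoint_singleton]
    exact fun he => hne (by rw [he])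
  · ext c
    rw [Finset.image_biUnion]
    simp

theorem tilingSpin_one {S : Finset Cell} {T : Finset (Finset Cell)} (h : IsTilingOf 1 S T) :
    tilingSpin T = 0 := by
  refine Finset.sum_eq_zero fun R hR => ?_
  obtain ⟨c, rfl⟩ := Finset.card_eq_one.1 (h.1 R hR).1
  simp [ribbonSpin]

/-- The square above a square of the larger partition of a horizontal strip lies in the smaller
partition. -/
theorem above_mem {ka mu : YoungDiagram} {T : Finset (Finset Cell)}
    (hT : IsHStripTiling 1 (mu.cells \ ka.cells) T) {i j : ℕ}
    (h : (i + 1, j) ∈ mu.cells) : (i, j) ∈ ka.cells := by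
  by_contra hk
  have hm : (i, j) ∈ mu.cells := mu.up_left_mem (Nat.le_succ i) le_rfl h
  have hk2 : (i + 1, j) ∉ ka.cells := fun h' => hk (ka.up_left_mem (Nat.le_succ i) le_rfl h')
  have hR : ({(i + 1, j)} : Finset Cell) ∈ T := by
    rw [tiling_one hT.1]
    exact Finset.mem_image.2 ⟨_, Finset.mem_sdiff.2 ⟨h, hk2⟩, rfl⟩
  rcases hT.2 _ hR (i + 1, j) ⟨Finset.mem_singleton_self _, by
    intro d hd
    rw [Finset.mem_singleton] at hd
    subst hd
    exact ⟨le_rfl, fun _ => le_rfl⟩⟩ with h1 | h1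
  · exact absurd h1 (Nat.succ_ne_zero i)
  · exact h1 (Finset.mem_sdiff.2 ⟨hm, hk⟩)

/-- Entries of a semistandard tableau increase down the columns, so the letters up to `k` occupy only
the first `k` rows. -/
theorem chain_row_lt {N : ℕ} {nu : YoungDiagram} (T : RibbonTableau 1 N nu ⊥) :
    ∀ (k : Fin (N + 1)) (c : Cell), c ∈ (T.chain k).cells → c.1 < k := by
  intro k
  induction k using Fin.induction with
  | zero =>
    intro c hc
    rw [T.chain_zero] at hc
    simp at hc
  | succ k ih =>
    rintro ⟨i, j⟩ hc
    cases i with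
    | zero => simp
    | succ i =>
      have := ih (i, j) (above_mem (T.tiling_strip k) hc)
      simp only [Fin.val_castSucc, Fin.val_succ] at this ⊢
      omega

theorem chain_le_firstRows {N : ℕ} {nu : YoungDiagram} (T : RibbonTableau 1 N nu ⊥)
    (k : Fin (N + 1)) : T.chain k ≤ firstRows k nu :=
  fun c hc => mem_firstRows.2 ⟨T.le_lam k hc, chain_row_lt T k c hc⟩

/-- The weight of a ribbon tableau. -/
def RibbonTableau.wt {n N : ℕ} {lam mu : YoungDiagram} (T : RibbonTableau n N lam mu) :
    Fin N →₀ ℕ := Finsupp.equivFunOnFinite.symm (fun i => (T.tiling i).card)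

/-- A partition as an exponent vector in `N` variables. -/
def rowWt (N : ℕ) (la : YoungDiagram) : Fin N →₀ ℕ :=
  Finsupp.equivFunOnFinite.symm (fun i => la.rowLen i)

theorem tableauTerm_eq {n N : ℕ} {lam mu : YoungDiagram} (T : RibbonTableau n N lam mu) :
    tableauTerm T = MvPolynomial.monomial T.wt (Polynomial.X ^ T.spin) := by
  rw [MvPolynomial.monomial_eq, tableauTerm, Finsupp.prod_fintype _ _ (fun i => pow_zero _)]
  rfl

theorem coeff_ribbonFn {n N : ℕ} {lam mu : YoungDiagram} [Fintype (RibbonTableau n N lam mu)]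
    (a : Fin N →₀ ℕ) : MvPolynomial.coeff a (ribbonFn n N lam mu) =
      ∑ T : RibbonTableau n N lam mu, if T.wt = a then Polynomial.X ^ T.spin else 0 := by
  rw [ribbonFn, finsum_eq_sum_of_fintype, MvPolynomial.coeff_sum]
  refine Finset.sum_congr rfl fun T _ => ?_
  rw [tableauTerm_eq, MvPolynomial.coeff_monomial]

theorem chain_card {N : ℕ} {la nu : YoungDiagram} (T : RibbonTableau 1 N nu ⊥)
    (h : T.wt = rowWt N la) (k : Fin (N + 1)) : (T.chain k).card = (firstRows k la).card := by
  induction k using Fin.induction with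
  | zero => rw [T.chain_zero, Fin.val_zero, firstRows_zero]
  | succ k ih =>
    have h1 := stripTilings_card (T.chain_mono k) (mem_stripTilings.2 (T.tiling_strip k))
    have h2 : (T.tiling k).card = la.rowLen k := DFunLike.congr_fun h k
    rw [h1, ih, h2, Fin.val_succ, firstRows_card_succ, one_mul, Fin.val_castSucc]

/-- The tableau whose `i`-th row is filled with the letter `i`. -/
def rowTab (N : ℕ) (nu : YoungDiagram) (h : nu.card ≤ N) : RibbonTableau 1 N nu ⊥ where
  chain k := firstRows k nu
  chain_zero := firstRows_zero nu
  chain_last := firstRows_of_card_le h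
  chain_mono := by
    intro i c hc
    rw [← YoungDiagram.mem_cells, mem_firstRows] at hc ⊢
    rw [Fin.val_castSucc] at hc
    rw [Fin.val_succ]
    exact ⟨hc.1, by omega⟩
  tiling i := ((firstRows (i + 1) nu).cells \ (firstRows i nu).cells).image (fun c => {c})
  tiling_strip := by
    intro i
    refine ⟨isTilingOf_one _, ?_⟩
    intro R hR c hc
    obtain ⟨d, hd, rfl⟩ := Finset.mem_image.1 hR
    have hcd := Finset.mem_singleton.1 hc.1
    subst hcd
    by_cases h0 : c.1 = 0
    · exact Or.inl h0
    · right
      intro hm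
      rw [Finset.mem_sdiff, mem_firstRows, mem_firstRows] at hd hm
      simp only [Fin.val_castSucc, Fin.val_succ] at hd hm
      have h1 := hd.1.2
      exact hm.2 ⟨hm.1.1, by omega⟩

theorem rowTab_wt (N : ℕ) (nu : YoungDiagram) (h : nu.card ≤ N) :
    (rowTab N nu h).wt = rowWt N nu := by
  ext k
  have h1 := stripTilings_card ((rowTab N nu h).chain_mono k)
    (mem_stripTilings.2 ((rowTab N nu h).tiling_strip k))
  change (firstRows (k + 1) nu).card = (firstRows k nu).card + _ at h1
  rw [firstRows_card_succ] at h1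
  change ((rowTab N nu h).tiling k).card = nu.rowLen k
  omega

theorem eq_rowTab {N : ℕ} {nu : YoungDiagram} (h : nu.card ≤ N) (T : RibbonTableau 1 N nu ⊥)
    (hT : T.wt = rowWt N nu) : T = rowTab N nu h := by
  have hch : T.chain = (rowTab N nu h).chain := by
    funext k
    have h1 := Finset.eq_of_subset_of_card_le
      (show (T.chain k).cells ⊆ (firstRows k nu).cells from chain_le_firstRows T k)
      (chain_card T hT k).ge
    exact YoungDiagram.ext h1
  refine RibbonTableau.ext' hch ?_
  funext k
  rw [tiling_one (T.tiling_strip k).1, tiling_one ((rowTab N nu h).tiling_strip k).1, hch]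

theorem coeff_schurPoly_self {N : ℕ} {nu : YoungDiagram} (h : nu.card ≤ N) :
    MvPolynomial.coeff (rowWt N nu) (schurPoly N nu) = 1 := by
  have hF : Fintype (RibbonTableau 1 N nu ⊥) := Fintype.ofFinite _
  rw [schurPoly, coeff_ribbonFn, Finset.sum_eq_single (rowTab N nu h)]
  · rw [if_pos (rowTab_wt N nu h)]
    have : (rowTab N nu h).spin = 0 :=
      Finset.sum_eq_zero fun i _ => tilingSpin_one ((rowTab N nu h).tiling_strip i).1
    rw [this, pow_zero]
  · intro T _ hne
    rw [if_neg]
    exact fun hT => hne (eq_rowTab h T hT)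
  · intro hno
    exact absurd (Finset.mem_univ _) hno

/-- Triangularity of the monomial expansion of Schur polynomials in dominance order. -/
theorem firstRows_card_le {N : ℕ} {la nu : YoungDiagram}
    (h : MvPolynomial.coeff (rowWt N la) (schurPoly N nu) ≠ 0) {k : ℕ} (hk : k ≤ N) :
    (firstRows k la).card ≤ (firstRows k nu).card := by
  have hF : Fintype (RibbonTableau 1 N nu ⊥) := Fintype.ofFinite _
  rw [schurPoly, coeff_ribbonFn] at h
  obtain ⟨T, -, hT⟩ := Finset.exists_ne_zero_of_sum_ne_zero h
  have hw : T.wt = rowWt N la := by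
    by_contra hne
    exact hT (if_neg hne)
  have h1 := chain_card T hw ⟨k, by omega⟩
  have h2 := Finset.card_le_card
    (show (T.chain ⟨k, by omega⟩).cells ⊆ (firstRows k nu).cells from chain_le_firstRows T _)
  change (firstRows k la).card ≤ (firstRows k nu).cells.card
  simp only at h1
  rw [← h1]
  exact h2

/-- Linear independence of the Schur polynomials of degree `m` in at least `m` variables, with
coefficients in any ring over `ℤ[q]`. -/
theorem schur_independent {B : Type*} [CommRing B] (g : Polynomial ℤ →+* B) {m N : ℕ}
    (hm : m ≤ N) (a : YoungDiagram → B)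
    (h : ∑ nu ∈ lev m, MvPolynomial.C (a nu) * MvPolynomial.map g (schurPoly N nu) = 0) :
    ∀ nu ∈ lev m, a nu = 0 := by
  by_contra hne
  push Not at hne
  obtain ⟨nu0, hnu0, ha0⟩ := hne
  obtain ⟨la, hla, hmax⟩ := Finset.exists_max_image ((lev m).filter (fun nu => a nu ≠ 0))
    (fun nu => ∑ k ∈ Finset.range (N + 1), (firstRows k nu).card)
    ⟨nu0, Finset.mem_filter.2 ⟨hnu0, ha0⟩⟩
  rw [Finset.mem_filter, mem_lev] at hla
  apply hla.2
  have h1 := congrArg (MvPolynomial.coeff (rowWt N la)) h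
  rw [MvPolynomial.coeff_sum, Finset.sum_eq_single la] at h1
  · rw [MvPolynomial.coeff_C_mul, MvPolynomial.coeff_map,
      coeff_schurPoly_self (by omega), map_one, mul_one, MvPolynomial.coeff_zero] at h1
    exact h1
  · intro nu hnu hne
    rw [MvPolynomial.coeff_C_mul, MvPolynomial.coeff_map]
    by_cases hz : a nu = 0
    · rw [hz, zero_mul]
    by_cases hc : MvPolynomial.coeff (rowWt N la) (schurPoly N nu) = 0
    · rw [hc, map_zero, mul_zero]
    exfalso
    apply hne
    have hle : ∀ k ∈ Finset.range (N + 1), (firstRows k la).card ≤ (firstRows k nu).card :=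
      fun k hk => firstRows_card_le hc (Nat.lt_succ_iff.1 (Finset.mem_range.1 hk))
    have heq := (Finset.sum_eq_sum_iff_of_le hle).1 (le_antisymm (Finset.sum_le_sum hle)
      (hmax nu (Finset.mem_filter.2 ⟨hnu, hz⟩)))
    rw [mem_lev] at hnu
    exact (eq_of_firstRows_card (la := la) (nu := nu) (N := N) (by omega) (by omega)
      (fun k hk => heq k (Finset.mem_range.2 (by omega)))).symm
  · intro h'
    exact absurd (mem_lev.2 hla.1) h'

end

noncomputable section

/-! ### Changing the number of variables -/

section

variable {A : Type*} [CommRing A] {n : ℕ} (q : A)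

theorem dOp_zero (hn : 1 ≤ n) : dOp n q 0 = 1 := by
  apply Finsupp.lhom_ext'
  intro la
  apply LinearMap.ext_ring
  ext nu
  simp only [LinearMap.coe_comp, Function.comp_apply, Finsupp.lsingle_apply]
  rw [dOp_entry, stripW_zero q hn, Module.End.one_apply, Finsupp.single_apply]
  simp only [eq_comm]

/-- The nonzero letters of an alphabet. -/
def nz (ys : List A) : List A := ys.filter (fun y => y ≠ 0)

theorem pOp_filter (hn : 1 ≤ n) (ys : List A) :
    pOp n q (nz ys) = pOp n q ys := by
  induction ys with
  | nil => rfl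
  | cons y ys ih =>
    by_cases h : y = 0
    · subst h
      rw [nz, List.filter_cons_of_neg (by simp), ← nz, ih]
      simp only [pOp, List.map_cons, List.prod_cons, dOp_zero q hn, one_mul]
    · rw [nz, List.filter_cons_of_pos (by simpa using h), ← nz]
      simp only [pOp, List.map_cons, List.prod_cons] at ih ⊢
      rw [ih]

/-- Letters equal to zero do not contribute to a ribbon function. -/
theorem Gv_filter (hn : 1 ≤ n) (ys : List A) (la mu : YoungDiagram) :
    Gv n q (nz ys) la mu = Gv n q ys la mu := by
  rw [Gv, pOp_filter q hn, Gv]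

end

theorem tab_card {n N : ℕ} {lam mu : YoungDiagram} (T : RibbonTableau n N lam mu) :
    lam.card = mu.card + n * ∑ i, (T.tiling i).card := by
  induction N generalizing mu with
  | zero =>
    have h1 : lam = mu := T.chain_last.symm.trans T.chain_zero
    simp [h1]
  | succ N ih =>
    have h1 := ih (tailTab T)
    have h2 := stripTilings_card (T.chain_mono 0) (mem_stripTilings.2 (T.tiling_strip 0))
    rw [Fin.castSucc_zero, T.chain_zero] at h2
    rw [Fin.sum_univ_succ, h1, h2]
    change _ + n * ∑ i : Fin N, (T.tiling i.succ).card = _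
    ring

/-- Ribbon functions are homogeneous. -/
theorem coeff_ribbonFn_eq_zero {n N m : ℕ} (hn : 1 ≤ n) {lam mu : YoungDiagram}
    (hc : lam.card = mu.card + n * m) {a : Fin N →₀ ℕ} (ha : ∑ i, a i ≠ m) :
    MvPolynomial.coeff a (ribbonFn n N lam mu) = 0 := by
  have hF : Fintype (RibbonTableau n N lam mu) := Fintype.ofFinite _
  rw [coeff_ribbonFn]
  refine Finset.sum_eq_zero fun T _ => if_neg ?_
  rintro rfl
  apply ha
  have h1 := tab_card T
  have h2 : n * ∑ i, (T.tiling i).card = n * m := by omega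
  exact Nat.eq_of_mul_eq_mul_left hn h2

/-- Setting to zero variables outside the support of an exponent does not change its
coefficient. -/
theorem coeff_eval_support {R : Type*} [CommRing R] {N : ℕ} (a : Fin N →₀ ℕ)
    (p : MvPolynomial (Fin N) R) :
    MvPolynomial.coeff a (MvPolynomial.eval₂ MvPolynomial.C
      (fun i => if i ∈ a.support then (MvPolynomial.X i : MvPolynomial (Fin N) R) else 0) p) =
    MvPolynomial.coeff a p := by
  induction p using MvPolynomial.induction_on' with
  | monomial s r =>
    rw [MvPolynomial.eval₂_monomial]
    by_cases hs : s.support ⊆ a.support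
    · congr 1
      rw [MvPolynomial.monomial_eq]
      congr 1
      refine Finset.prod_congr rfl fun i hi => ?_
      simp only [if_pos (hs hi)]
    · obtain ⟨i, hi, hia⟩ := Finset.not_subset.1 hs
      have hz : (s.prod fun i k => (if i ∈ a.support then
          (MvPolynomial.X i : MvPolynomial (Fin N) R) else 0) ^ k) = 0 := by
        refine Finset.prod_eq_zero hi ?_
        simp only [if_neg hia]
        exact zero_pow (Finsupp.mem_support_iff.1 hi)
      rw [hz, mul_zero, MvPolynomial.coeff_zero, MvPolynomial.coeff_monomial, if_neg]
      rintro rfl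
      exact hia hi
  | add p r hp hr =>
    rw [MvPolynomial.eval₂_add, MvPolynomial.coeff_add, MvPolynomial.coeff_add, hp, hr]

/-- A Schur expansion in sufficiently many variables holds in any number of variables. -/
theorem expand_transfer {n m N' : ℕ} (hn : 1 ≤ n) (hm : m ≤ N') {mu delta : YoungDiagram}
    (hcard : mu.card = delta.card + n * m) (a : YoungDiagram → Polynomial ℤ)
    (h : ribbonFn n N' mu delta = ∑ nu ∈ lev m, MvPolynomial.C (a nu) * schurPoly N' nu)
    (N : ℕ) :
    ribbonFn n N mu delta = ∑ nu ∈ lev m, MvPolynomial.C (a nu) * schurPoly N nu := by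
  set Q : MvPolynomial (Fin N) (Polynomial ℤ) := MvPolynomial.C Polynomial.X with hQ
  have key1 : ∀ ys : List (MvPolynomial (Fin N) (Polynomial ℤ)), ys.length = N' →
      Gv n Q ys mu delta = ∑ nu ∈ lev m, MvPolynomial.C (a nu) * Gv 1 Q ys nu ⊥ := by
    intro ys hlen
    subst hlen
    have h1 := congrArg (MvPolynomial.eval₂ MvPolynomial.C ys.get) h
    rw [eval_ribbonFn hn, MvPolynomial.eval₂_sum, List.ofFn_get] at h1
    rw [h1]
    refine Finset.sum_congr rfl fun nu _ => ?_
    rw [MvPolynomial.eval₂_mul, MvPolynomial.eval₂_C, schurPoly, eval_ribbonFn le_rfl,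
      List.ofFn_get]
  have key2 : ∀ ys : List (MvPolynomial (Fin N) (Polynomial ℤ)),
      (nz ys).length ≤ N' →
      Gv n Q ys mu delta = ∑ nu ∈ lev m, MvPolynomial.C (a nu) * Gv 1 Q ys nu ⊥ := by
    intro ys hlen
    have h1 := key1 (nz ys ++
      List.replicate (N' - (nz ys).length) 0)
      (by rw [List.length_append, List.length_replicate]; omega)
    have h2 : ∀ k, nz (nz ys ++ List.replicate k 0) =
        nz ys := by
      intro k
      rw [nz, nz, List.filter_append, List.filter_filter]
      simp
    rw [← Gv_filter Q hn, h2, Gv_filter Q hn] at h1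
    rw [h1]
    refine Finset.sum_congr rfl fun nu _ => ?_
    rw [← Gv_filter Q le_rfl, h2, Gv_filter Q le_rfl]
  ext1 al
  by_cases hal : ∑ i, al i = m
  · rw [← coeff_eval_support al (ribbonFn n N mu delta), ← coeff_eval_support al (∑ nu ∈ lev m, _)]
    congr 1
    rw [eval_ribbonFn hn, MvPolynomial.eval₂_sum, key2]
    · refine Finset.sum_congr rfl fun nu _ => ?_
      rw [MvPolynomial.eval₂_mul, MvPolynomial.eval₂_C, schurPoly, eval_ribbonFn le_rfl]
    · rw [nz, List.ofFn_eq_map, List.filter_map, List.length_map,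
        ← List.toFinset_card_of_nodup ((List.nodup_finRange N).filter _)]
      refine le_trans (Finset.card_le_card (t := al.support) ?_) ?_
      · intro i hi
        rw [List.mem_toFinset, List.mem_filter] at hi
        by_contra hia
        simp at hi
        exact hia (Finsupp.mem_support_iff.2 hi)
      · calc al.support.card = ∑ i ∈ al.support, 1 := by simp
          _ ≤ ∑ i ∈ al.support, al i := Finset.sum_le_sum fun i hi =>
              Nat.one_le_iff_ne_zero.2 (Finsupp.mem_support_iff.1 hi)
          _ ≤ ∑ i, al i := Finset.sum_le_sum_of_subset (Finset.subset_univ _)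
          _ ≤ N' := by omega
  · rw [coeff_ribbonFn_eq_zero hn hcard hal, MvPolynomial.coeff_sum]
    symm
    refine Finset.sum_eq_zero fun nu hnu => ?_
    rw [mem_lev] at hnu
    rw [MvPolynomial.coeff_C_mul, schurPoly,
      coeff_ribbonFn_eq_zero le_rfl (by rw [hnu]; simp) hal, mul_zero]

/-! ### The plethystic alphabet and the Cauchy identity -/

/-- The letters `x` in an `n`-ribbon Cauchy kernel amount to the letters `q ^ (2 j) * x` in an
ordinary one. -/
theorem eSer_alphabet {A : Type*} [CommRing A] (n N : ℕ) (q : A) (x : Fin N → A) :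
    eSer n q (List.ofFn x) = eSer 1 q (List.ofFn fun t : Fin (n * N) =>
      q ^ (2 * ((finProdFinEquiv.symm t).1 : ℕ)) * x (finProdFinEquiv.symm t).2) := by
  unfold eSer
  simp only [List.map_ofFn, List.prod_ofFn, Function.comp_apply]
  rw [← Equiv.prod_comp finProdFinEquiv]
  simp only [Equiv.symm_apply_apply]
  rw [Fintype.prod_prod_type, Finset.prod_comm]
  refine Finset.prod_congr rfl fun i _ => ?_
  rw [ePol, gFac, ← Finset.range_eq_Ico, Finset.prod_range,
    ← Polynomial.coeToPowerSeries.ringHom_apply, map_prod]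
  refine Finset.prod_congr rfl fun j _ => ?_
  rw [Polynomial.coeToPowerSeries.ringHom_apply]
  congr 1
  simp only [ePol, gFac, Nat.Ico_succ_singleton, Finset.prod_singleton, map_mul, map_pow]
  ring

end

noncomputable section

/-- The image of a ribbon function under a ring homomorphism only depends on the images of `q` and of
the variables. -/
theorem hom_ribbonFn {A : Type*} [CommRing A] {k N : ℕ} (hk : 1 ≤ k)
    (phi : MvPolynomial (Fin N) (Polynomial ℤ) →+* A) (mu ka : YoungDiagram) :
    phi (ribbonFn k N mu ka) =
      Gv k (phi (MvPolynomial.C Polynomial.X)) (List.ofFn fun i => phi (MvPolynomial.X i)) mu ka := by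
  conv_lhs => rw [← MvPolynomial.eval₂_eta (ribbonFn k N mu ka)]
  rw [MvPolynomial.eval₂_comp_left, eval_ribbonFn hk]
  rfl

theorem map_ribbonFn {B : Type*} [CommRing B] (g : Polynomial ℤ →+* B) {k : ℕ} (hk : 1 ≤ k)
    (N : ℕ) (mu ka : YoungDiagram) : MvPolynomial.map g (ribbonFn k N mu ka) =
      Gv k (MvPolynomial.C (g Polynomial.X)) (List.ofFn MvPolynomial.X) mu ka := by
  refine (hom_ribbonFn (A := MvPolynomial (Fin N) B) hk (MvPolynomial.map g) mu ka).trans ?_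
  rw [MvPolynomial.map_C]
  simp only [MvPolynomial.map_X]

theorem C_hom_ribbonFn {B : Type*} [CommRing B] {k N N' : ℕ} (hk : 1 ≤ k)
    (phi : MvPolynomial (Fin N) (Polynomial ℤ) →+* B) (mu ka : YoungDiagram) :
    (MvPolynomial.C (phi (ribbonFn k N mu ka)) : MvPolynomial (Fin N') B) =
      Gv k (MvPolynomial.C (phi (MvPolynomial.C Polynomial.X)))
        (List.ofFn fun i => MvPolynomial.C (phi (MvPolynomial.X i))) mu ka :=
  hom_ribbonFn (A := MvPolynomial (Fin N') B) hk (MvPolynomial.C.comp phi) mu ka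

/-- The Cauchy identity for ribbon functions, in the two sets of variables `Fin N'` (outer) and
`Fin N` (inner). -/
theorem ribbon_cauchy {n : ℕ} (hn : 1 ≤ n) (N N' m : ℕ) {delta : YoungDiagram}
    (hd : ∀ mu, ¬ RibbonStep n delta mu) :
    ∑ mu ∈ lev (delta.card + n * m),
      MvPolynomial.map MvPolynomial.C (ribbonFn n N' mu delta) *
        MvPolynomial.C (ribbonFn n N mu delta) =
    ∑ nu ∈ lev m, MvPolynomial.map MvPolynomial.C (schurPoly N' nu) *
      (MvPolynomial.C (schurAlph n N nu) :
        MvPolynomial (Fin N') (MvPolynomial (Fin N) (Polynomial ℤ))) := by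
  set Q : MvPolynomial (Fin N') (MvPolynomial (Fin N) (Polynomial ℤ)) :=
    MvPolynomial.C (MvPolynomial.C Polynomial.X) with hQ
  have h1 : ∀ (k : ℕ) (_ : 1 ≤ k) (mu ka : YoungDiagram),
      MvPolynomial.map MvPolynomial.C (ribbonFn k N' mu ka) =
        Gv k Q (List.ofFn MvPolynomial.X) mu ka := by
    intro k hk mu ka
    exact map_ribbonFn MvPolynomial.C hk N' mu ka
  have h2 : ∀ mu, MvPolynomial.C (ribbonFn n N mu delta) =
      Gv n Q (List.ofFn fun i => MvPolynomial.C (MvPolynomial.X i)) mu delta :=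
    fun mu => C_hom_ribbonFn hn (RingHom.id _) mu delta
  have h3 : ∀ nu, MvPolynomial.C (schurAlph n N nu) =
      Gv 1 Q (List.ofFn fun t : Fin (n * N) =>
        Q ^ (2 * ((finProdFinEquiv.symm t).1 : ℕ)) *
          MvPolynomial.C (MvPolynomial.X (finProdFinEquiv.symm t).2)) nu ⊥ := by
    intro nu
    rw [schurAlph, schurPoly]
    refine (C_hom_ribbonFn le_rfl (MvPolynomial.aeval
      (R := Polynomial ℤ) _).toRingHom nu ⊥).trans ?_
    simp [alphabetVal, hQ]
  have h4 := kern_eq Q hn le_rfl hd bot_core (List.ofFn MvPolynomial.X) _ _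
    (eSer_alphabet n N Q fun i => MvPolynomial.C (MvPolynomial.X i)) m
  unfold kern at h4
  have h5 : (⊥ : YoungDiagram).card + 1 * m = m := by simp
  rw [h5] at h4
  simp only [h1 n hn, h2, h3, schurPoly, h1 1 le_rfl]
  exact h4

theorem ribbonFn_eq_zero {n N : ℕ} (hn : 1 ≤ n) {mu delta : YoungDiagram}
    (h : ¬ Relation.ReflTransGen (RibbonStep n) mu delta) : ribbonFn n N mu delta = 0 := by
  rw [← MvPolynomial.eval₂_eta (ribbonFn n N mu delta), eval_ribbonFn hn]
  by_contra hne
  exact h (reach_of_Gv_ne _ hn _ hne)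

theorem finsum_lev {M : Type*} [AddCommMonoid M] (m : ℕ) (F : YoungDiagram → M) :
    ∑ᶠ nu ∈ {nu : YoungDiagram | nu.card = m}, F nu = ∑ nu ∈ lev m, F nu := by
  rw [← finsum_mem_coe_finset]
  congr 1
  funext nu
  simp only [Set.mem_ofPred_eq, Finset.mem_coe, mem_lev]

end

/-- `s_λ(A_q(x)) = Σ_{μ,ν} c^λ_μ(q) c^ν_μ(q) s_ν(x)`, where `μ` ranges over
partitions with `n`-core `δ` and `|μ/δ| = n|λ|` and `ν` over partitions with `|λ|` cells
(i.e. the sizes for which the q-Littlewood–Richardson coefficients of `𝒢_μ` live).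
The coefficients `c μ ν` are pinned down by the Schur expansions in `N' ≥ |λ|` variables. -/
theorem schurAlph_eq_double_sum_qLR (n N : ℕ) (hn : 1 ≤ n) (hN : 1 ≤ N)
    (lam delta : YoungDiagram) (hdelta : IsNCoreOf n delta delta)
    (N' : ℕ) (hN' : lam.card ≤ N')
    (c : YoungDiagram → YoungDiagram → Polynomial ℤ)
    (hc : ∀ mu : YoungDiagram, IsNCoreOf n delta mu → mu.card = delta.card + n * lam.card →
      ribbonFn n N' mu delta =
        ∑ᶠ nu ∈ {nu : YoungDiagram | nu.card = lam.card},
          MvPolynomial.C (c mu nu) * schurPoly N' nu) :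
    schurAlph n N lam =
      ∑ᶠ mu ∈ {mu : YoungDiagram | IsNCoreOf n delta mu ∧
          mu.card = delta.card + n * lam.card},
        ∑ᶠ nu ∈ {nu : YoungDiagram | nu.card = lam.card},
          MvPolynomial.C (c mu lam * c mu nu) * schurPoly N nu := by
  have hd := hdelta.2
  -- Only partitions with core `delta` contribute; the other coefficients are set to zero.
  set c' : YoungDiagram → YoungDiagram → Polynomial ℤ :=
    fun mu nu => if IsNCoreOf n delta mu then c mu nu else 0 with hc'
  have hexp : ∀ mu ∈ lev (delta.card + n * lam.card), ribbonFn n N' mu delta =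
      ∑ nu ∈ lev lam.card, MvPolynomial.C (c' mu nu) * schurPoly N' nu := by
    intro mu hmu
    rw [mem_lev] at hmu
    by_cases h : IsNCoreOf n delta mu
    · rw [hc mu h hmu, finsum_lev]
      simp only [hc', if_pos h]
    · rw [ribbonFn_eq_zero hn (fun h' => h ⟨h', hd⟩)]
      simp only [hc', if_neg h, map_zero, zero_mul, Finset.sum_const_zero]
  -- Comparing coefficients of Schur polynomials in the Cauchy identity.
  have hA : schurAlph n N lam = ∑ mu ∈ lev (delta.card + n * lam.card),
      MvPolynomial.C (c' mu lam) * ribbonFn n N mu delta := by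
    have h1 := ribbon_cauchy hn N N' lam.card hd
    have h2 := schur_independent (MvPolynomial.C : _ →+* MvPolynomial (Fin N) (Polynomial ℤ)) hN'
      (fun nu => (∑ mu ∈ lev (delta.card + n * lam.card),
        MvPolynomial.C (c' mu nu) * ribbonFn n N mu delta) - schurAlph n N nu) ?_ lam
      (mem_lev.2 rfl)
    · exact (sub_eq_zero.1 h2).symm
    · simp only [map_sub, sub_mul, Finset.sum_sub_distrib]
      rw [sub_eq_zero]
      simp only [mul_comm (MvPolynomial.C (schurAlph _ _ _))]
      rw [← h1]
      simp only [map_sum, Finset.sum_mul]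
      rw [Finset.sum_comm]
      refine Finset.sum_congr rfl fun mu hmu => ?_
      rw [hexp mu hmu, map_sum, Finset.sum_mul]
      refine Finset.sum_congr rfl fun nu _ => ?_
      rw [map_mul, map_mul, MvPolynomial.map_C]
      ring
  have hset : ∀ mu : YoungDiagram, (∑ᶠ _ : mu ∈ {mu : YoungDiagram | IsNCoreOf n delta mu ∧
          mu.card = delta.card + n * lam.card},
        ∑ᶠ nu ∈ {nu : YoungDiagram | nu.card = lam.card},
          MvPolynomial.C (c mu lam * c mu nu) * schurPoly N nu) =
      ∑ᶠ _ : mu ∈ {mu : YoungDiagram | mu.card = delta.card + n * lam.card},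
        ∑ nu ∈ lev lam.card, MvPolynomial.C (c' mu lam * c' mu nu) * schurPoly N nu := by
    intro mu
    rw [finsum_lev]
    simp only [Set.mem_ofPred_eq, finsum_eq_if]
    by_cases h : IsNCoreOf n delta mu
    · simp only [hc', h, true_and, if_true]
    · simp only [hc', h, false_and, if_false, map_zero, zero_mul, Finset.sum_const_zero, ite_self]
  rw [finsum_congr hset, finsum_lev, hA]
  refine Finset.sum_congr rfl fun mu hmu => ?_
  rw [expand_transfer hn hN' (mem_lev.1 hmu) (c' mu) (hexp mu hmu) N, Finset.mul_sum]
  refine Finset.sum_congr rfl fun nu _ => ?_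
  rw [map_mul, mul_assoc]
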